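/- arXiv:2107.02158 — 2 statements merged into one kernel-verified Lean document; each statement's English description precedes it below -/
import Mathlib

section
/- For every integer k ≥ 1 there is a constant C_k > 0 such that the following holds. Let N ≥ 100 be a real number, let q be an integer with 1 ≤ q ≤ N, and let f: ℤ → [−1, 1] be supported on {n ∈ ℕ : 1 ≤ n ≤ N}. Then ‖f‖_{U^k([N])}^{2^k} ≤ C_k·∑_{d | q} (1/d)·‖n ↦ f(d·n)·1_{gcd(n, q/d) = 1}‖_{U^k([N/d])}. -/
open scoped Classical

noncomputable section

/-- The product of conjugated shifts appearing in the Gowers norm over an additive group. -/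
def gowersProd {G : Type*} [AddCommGroup G] (k : ℕ) (f : G → ℂ) (n : G) (h : Fin k → G) : ℂ :=
  ∏ ω : Fin k → Bool,
    (⇑(starRingEnd ℂ))^[(Finset.univ.filter fun i => ω i = true).card]
      (f (n + ∑ i, if ω i then h i else 0))

/-- The unnormalized Gowers norm `‖f‖_{Ũ^k(G)}`. -/
def gowersTildeU {G : Type*} [AddCommGroup G] (k : ℕ) (f : G → ℂ) : ℝ :=
  (∑' nh : G × (Fin k → G), gowersProd k f nh.1 nh.2).re ^ ((1 : ℝ) / 2 ^ k)

/-- The restriction `f·1_{[N]}` of `f : ℤ → ℂ` to `[N] = {n ∈ ℕ : 1 ≤ n ≤ N}`. -/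
def truncN (N : ℝ) (f : ℤ → ℂ) : ℤ → ℂ := fun n => if 1 ≤ n ∧ (n : ℝ) ≤ N then f n else 0

/-- The local (normalized) Gowers norm `‖f‖_{U^k([N])}`. -/
def gowersUN (k : ℕ) (N : ℝ) (f : ℤ → ℂ) : ℝ :=
  gowersTildeU k (truncN N f) / gowersTildeU k (truncN N fun _ => 1)

end

/-!
Sort `n ∈ [N]` by `d = gcd(n, q)` and write `f = ∑_{d ∣ q} f_d`, where `f_d` is supported on the
multiples `T_d` of `d` in `[N]`. By linearity in the first slot, `‖f‖^{2^k} = ⟨f, f, …, f⟩` is the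
sum of the Gowers inner products `⟨f_d, f, …, f⟩` with a single factor `f_d`. Repeated
Cauchy–Schwarz bounds such a product, for `‖f‖_∞ ≤ 1`, by
`|[N] - [N]|^k · |T_d - T_d| · ‖f_d‖_{U^k(T_d)}`; here `|T_d - T_d|` produces the factor `1 / d`,
and rescaling by `d` carries `T_d` to `[N / d]`. The constant `2^{2^k}` is the price of bounding the
norm of `1_{[N]}` from below, using `|[N] - [N]| ≤ 2 |[N]|`.
-/

noncomputable section

open Finset ComplexConjugate
open scoped Pointwise

section Products

variable {G : Type*} [AddCommGroup G]

lemma gowersProd_succ (k : ℕ) (f : G → ℂ) (n : G) (h : Fin (k + 1) → G) :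
    gowersProd (k + 1) f n h =
      gowersProd k f n (Fin.tail h) * conj (gowersProd k f (n + h 0) (Fin.tail h)) := by
  have card_true (b : Bool) (ω : Fin k → Bool) :
      #{i | (Fin.cons b ω : Fin (k + 1) → Bool) i = true} =
        (if b then 1 else 0) + #{i | ω i = true} := by
    simp only [card_filter, Fin.sum_univ_succ, Fin.cons_zero, Fin.cons_succ]
  simp only [gowersProd, map_prod]
  rw [← (Fin.consEquiv fun _ => Bool).prod_comp, Fintype.prod_prod_type, Fintype.prod_bool,
    mul_comm]
  simp only [Fin.consEquiv_apply, card_true, Fin.sum_univ_succ, Fin.cons_zero, Fin.cons_succ]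
  simp [Fin.tail, add_assoc, add_comm 1, Function.iterate_succ_apply']

lemma ne_zero_of_gowersProd_ne_zero {k : ℕ} {f : G → ℂ} {n : G} {h : Fin k → G}
    (hprod : gowersProd k f n h ≠ 0) : f n ≠ 0 ∧ ∀ i, f (n + h i) ≠ 0 := by
  have face (ω : Fin k → Bool) : f (n + ∑ i, if ω i then h i else 0) ≠ 0 := by
    intro hzero
    refine hprod (prod_eq_zero (mem_univ ω) ?_)
    rw [hzero, Function.iterate_fixed (map_zero _)]
  exact ⟨by simpa using face fun _ => false, fun i => by simpa using face fun j => decide (j = i)⟩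

lemma norm_gowersProd_le_one {f : G → ℂ} (hf : ∀ n, ‖f n‖ ≤ 1) (k : ℕ) (n : G) (h : Fin k → G) :
    ‖gowersProd k f n h‖ ≤ 1 := by
  have norm_iterate_conj (m : ℕ) (z : ℂ) : ‖conj^[m] z‖ = ‖z‖ := by
    induction m generalizing z with
    | zero => rfl
    | succ m ih => rw [Function.iterate_succ_apply, ih, RCLike.norm_conj]
  simp only [gowersProd, norm_prod, norm_iterate_conj]
  exact prod_le_one (fun _ _ => norm_nonneg _) fun _ _ => hf _

lemma gowersProd_comp_addMonoidHom {G' : Type*} [AddCommGroup G'] (φ : G →+ G') (k : ℕ)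
    (f : G' → ℂ) (n : G) (h : Fin k → G) :
    gowersProd k (f ∘ φ) n h = gowersProd k f (φ n) (φ ∘ h) := by
  simp [gowersProd, map_sum, apply_ite φ]

/-- The multiplicative derivative `∂_t f (n) = f(n) · conj f(n + t)`. -/
def mulDeriv (t : G) (f : G → ℂ) (n : G) : ℂ := f n * conj (f (n + t))

lemma support_mulDeriv_subset (t : G) (f : G → ℂ) :
    Function.support (mulDeriv t f) ⊆ Function.support f :=
  fun _ hn => left_ne_zero_of_mul hn

lemma norm_mulDeriv_le_one {f : G → ℂ} (hf : ∀ n, ‖f n‖ ≤ 1) (t n : G) : ‖mulDeriv t f n‖ ≤ 1 := by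
  rw [mulDeriv, norm_mul, RCLike.norm_conj]
  exact mul_le_one₀ (hf _) (norm_nonneg _) (hf _)

lemma mulDeriv_eq_zero [DecidableEq G] {T : Finset G} {g : G → ℂ} (hg : Function.support g ⊆ T)
    {t : G} (ht : t ∉ T - T) : mulDeriv t g = 0 := by
  funext n
  by_contra hn
  refine ht (mem_sub.2 ⟨n + t, hg ?_, n, hg (left_ne_zero_of_mul hn), add_sub_cancel_left n t⟩)
  exact fun hzero => right_ne_zero_of_mul hn (by rw [hzero, map_zero])

lemma gowersProd_mulDeriv (k : ℕ) (t : G) (f : G → ℂ) (n : G) (h : Fin k → G) :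
    gowersProd k (mulDeriv t f) n h = gowersProd k f n h * conj (gowersProd k f (n + t) h) := by
  induction k generalizing n with
  | zero => simp [gowersProd, mulDeriv]
  | succ k ih =>
    simp only [gowersProd_succ, ih, map_mul, add_right_comm n t (h 0)]
    ring

/-- The Gowers product in which the factor `f n` at the vertex `ω = 0` is replaced by `g n`. The
recursion splits the cube along its first edge `h 0`, as in `gowersProd_succ`. -/
def gowersMixedProd : (k : ℕ) → (g f : G → ℂ) → G → (Fin k → G) → ℂ
  | 0, g, _, n, _ => g n
  | k + 1, g, f, n, h =>
    gowersMixedProd k g f n (Fin.tail h) * conj (gowersProd k f (n + h 0) (Fin.tail h))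

lemma gowersMixedProd_self (k : ℕ) (f : G → ℂ) (n : G) (h : Fin k → G) :
    gowersMixedProd k f f n h = gowersProd k f n h := by
  induction k with
  | zero => simp [gowersMixedProd, gowersProd]
  | succ k ih => rw [gowersMixedProd, ih, gowersProd_succ]

lemma gowersMixedProd_sum {ι : Type*} (s : Finset ι) (k : ℕ) (g : ι → G → ℂ) (f : G → ℂ) (n : G)
    (h : Fin k → G) :
    gowersMixedProd k (∑ i ∈ s, g i) f n h = ∑ i ∈ s, gowersMixedProd k (g i) f n h := by
  induction k with
  | zero => simp [gowersMixedProd]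
  | succ k ih => simp only [gowersMixedProd, ih, sum_mul]

lemma support_gowersMixedProd_subset (k : ℕ) (g f : G → ℂ) (h : Fin k → G) :
    (Function.support fun n => gowersMixedProd k g f n h) ⊆ Function.support g := by
  induction k with
  | zero => exact subset_rfl
  | succ k ih => exact fun n hn => ih _ (left_ne_zero_of_mul hn)

lemma gowersMixedProd_mulDeriv (k : ℕ) (t : G) (g f : G → ℂ) (n : G) (h : Fin k → G) :
    gowersMixedProd k (mulDeriv t g) (mulDeriv t f) n h =
      gowersMixedProd k g f n h * conj (gowersMixedProd k g f (n + t) h) := by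
  induction k with
  | zero => rfl
  | succ k ih =>
    simp only [gowersMixedProd, ih, gowersProd_mulDeriv, map_mul, add_right_comm n t (h 0)]
    ring

end Products

section Inner

variable {G : Type*} [AddCommGroup G] [DecidableEq G] {S T : Finset G}

/-- The box `(S - S)^k`, which contains every shift vector `h` contributing to the `k`-th Gowers
norm of a function supported in `S`. -/
abbrev diffBox (S : Finset G) (k : ℕ) : Finset (Fin k → G) := Fintype.piFinset fun _ => S - S

/-- The Gowers inner product `⟨g, f, …, f⟩` of order `k`, with `g` at the vertex `ω = 0` and `f` at
the other vertices, summed over `n ∈ S` and `h ∈ (S - S)^k`; for `g` and `f` supported in `S` this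
is the sum over the whole group. -/
def gowersInner (S : Finset G) (k : ℕ) (g f : G → ℂ) : ℂ :=
  ∑ h ∈ diffBox S k, ∑ n ∈ S, gowersMixedProd k g f n h

lemma card_diffBox (S : Finset G) (k : ℕ) : #(diffBox S k) = #(S - S) ^ k := by simp

lemma gowersInner_sum {ι : Type*} (s : Finset ι) (k : ℕ) (g : ι → G → ℂ) (f : G → ℂ) :
    gowersInner S k (∑ i ∈ s, g i) f = ∑ i ∈ s, gowersInner S k (g i) f := by
  simp only [gowersInner, gowersMixedProd_sum]
  exact sum_comm_cycle

lemma gowersInner_zero_left (k : ℕ) (f : G → ℂ) : gowersInner S k 0 f = 0 := by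
  simpa using gowersInner_sum (S := S) (∅ : Finset ℕ) k 0 f

lemma sum_diffBox_succ {M : Type*} [AddCommMonoid M] (k : ℕ) (F : G → (Fin k → G) → M) :
    ∑ h ∈ diffBox S (k + 1), F (h 0) (Fin.tail h) = ∑ t ∈ S - S, ∑ h ∈ diffBox S k, F t h := by
  rw [← sum_product']
  refine sum_equiv (Fin.consEquiv fun _ => G).symm (fun h => ?_) fun _ _ => rfl
  rw [Fin.mem_piFinset_iff_zero_tail, mem_product]
  rfl

lemma sum_sub_sum_mul_shift {R : Type*} [NonUnitalNonAssocSemiring R] (a : G → R) {b : G → R}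
    (hb : Function.support b ⊆ S) :
    ∑ t ∈ S - S, ∑ n ∈ S, a n * b (n + t) = (∑ n ∈ S, a n) * ∑ m ∈ S, b m := by
  rw [sum_comm, sum_mul]
  refine sum_congr rfl fun n hn => ?_
  rw [← mul_sum]
  congr 1
  refine (sum_of_injOn (· - n) (sub_left_injective.injOn) (fun m hm => sub_mem_sub hm hn)
    (fun t _ ht => ?_) fun m _ => by simp).symm
  by_contra hne
  exact ht ⟨n + t, hb hne, add_sub_cancel_left n t⟩

lemma gowersInner_succ (k : ℕ) (g : G → ℂ) {f : G → ℂ} (hf : Function.support f ⊆ S) :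
    gowersInner S (k + 1) g f = ∑ h ∈ diffBox S k,
      (∑ n ∈ S, gowersMixedProd k g f n h) * conj (∑ n ∈ S, gowersProd k f n h) := by
  have hsupp (h : Fin k → G) : (Function.support fun n => conj (gowersProd k f n h)) ⊆ S := by
    intro n hn
    refine hf (ne_zero_of_gowersProd_ne_zero (h := h) fun hzero => hn ?_).1
    simp only [hzero, map_zero]
  simp only [gowersInner, gowersMixedProd]
  rw [sum_diffBox_succ k fun t h =>
    ∑ n ∈ S, gowersMixedProd k g f n h * conj (gowersProd k f (n + t) h), sum_comm]
  exact sum_congr rfl fun h _ => by rw [sum_sub_sum_mul_shift _ (hsupp h), map_sum]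

lemma sum_norm_sq_eq_sum_gowersInner_mulDeriv (hTS : T ⊆ S) (k : ℕ) {g : G → ℂ} (f : G → ℂ)
    (hg : Function.support g ⊆ T) :
    ((∑ h ∈ diffBox S k, ‖∑ n ∈ S, gowersMixedProd k g f n h‖ ^ 2 : ℝ) : ℂ) =
      ∑ t ∈ T - T, gowersInner S k (mulDeriv t g) (mulDeriv t f) := by
  have hsupp (h : Fin k → G) :
      (Function.support fun n => conj (gowersMixedProd k g f n h)) ⊆ S := by
    intro n hn
    refine hTS (hg (support_gowersMixedProd_subset k g f h fun hzero => hn ?_))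
    simp only [hzero, map_zero]
  rw [sum_subset (sub_subset_sub hTS hTS) fun t _ ht => by
    rw [mulDeriv_eq_zero hg ht, gowersInner_zero_left]]
  simp only [gowersInner, gowersMixedProd_mulDeriv]
  rw [sum_comm]
  push_cast
  exact sum_congr rfl fun h _ => by
    rw [sum_sub_sum_mul_shift _ (hsupp h), ← map_sum, Complex.mul_conj']

lemma gowersInner_self_succ (k : ℕ) {f : G → ℂ} (hf : Function.support f ⊆ S) :
    gowersInner S (k + 1) f f =
      (∑ h ∈ diffBox S k, ‖∑ n ∈ S, gowersProd k f n h‖ ^ 2 : ℝ) := by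
  simp only [gowersInner_succ k f hf, gowersMixedProd_self, Complex.mul_conj']
  push_cast
  rfl

lemma gowersInner_self_succ_eq_sum_mulDeriv (hTS : T ⊆ S) (k : ℕ) {g : G → ℂ}
    (hg : Function.support g ⊆ T) :
    gowersInner S (k + 1) g g = ∑ t ∈ T - T, gowersInner S k (mulDeriv t g) (mulDeriv t g) := by
  rw [gowersInner_self_succ k (hg.trans (coe_subset.2 hTS)),
    ← sum_norm_sq_eq_sum_gowersInner_mulDeriv hTS k g hg]
  simp only [gowersMixedProd_self]

lemma gowersInner_self_succ_re_nonneg (k : ℕ) {f : G → ℂ} (hf : Function.support f ⊆ S) :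
    0 ≤ (gowersInner S (k + 1) f f).re := by
  rw [gowersInner_self_succ k hf, Complex.ofReal_re]
  positivity

lemma norm_sum_gowersProd_le {f : G → ℂ} (hf : ∀ n, ‖f n‖ ≤ 1) (k : ℕ) (h : Fin k → G) :
    ‖∑ n ∈ S, gowersProd k f n h‖ ≤ #(S - S) :=
  calc ‖∑ n ∈ S, gowersProd k f n h‖ ≤ ∑ _n ∈ S, (1 : ℝ) :=
        norm_sum_le_of_le S fun n _ => norm_gowersProd_le_one hf k n h
    _ = #S := by simp
    _ ≤ #(S - S) := by exact_mod_cast card_le_card_sub_self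

lemma norm_gowersInner_self_le {f : G → ℂ} (hf : ∀ n, ‖f n‖ ≤ 1) (k : ℕ) :
    ‖gowersInner S k f f‖ ≤ (#(S - S) : ℝ) ^ (k + 1) := by
  simp only [gowersInner, gowersMixedProd_self]
  calc ‖∑ h ∈ diffBox S k, ∑ n ∈ S, gowersProd k f n h‖
      ≤ ∑ _h ∈ diffBox S k, (#(S - S) : ℝ) :=
        norm_sum_le_of_le _ fun h _ => norm_sum_gowersProd_le hf k h
    _ = (#(S - S) : ℝ) ^ (k + 1) := by
        rw [sum_const, card_diffBox, nsmul_eq_mul, Nat.cast_pow, pow_succ]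

lemma norm_gowersInner_succ_sq_le (k : ℕ) (g : G → ℂ) {f : G → ℂ} (hf : Function.support f ⊆ S)
    (hf_one : ∀ n, ‖f n‖ ≤ 1) :
    ‖gowersInner S (k + 1) g f‖ ^ 2 ≤
      (∑ h ∈ diffBox S k, ‖∑ n ∈ S, gowersMixedProd k g f n h‖ ^ 2) * (#(S - S) : ℝ) ^ (k + 2) := by
  have hself : ∑ h ∈ diffBox S k, ‖∑ n ∈ S, gowersProd k f n h‖ ^ 2 ≤ (#(S - S) : ℝ) ^ (k + 2) :=
    calc ∑ h ∈ diffBox S k, ‖∑ n ∈ S, gowersProd k f n h‖ ^ 2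
        ≤ ‖gowersInner S (k + 1) f f‖ := by
          rw [gowersInner_self_succ k hf, Complex.norm_real]
          exact le_abs_self _
      _ ≤ (#(S - S) : ℝ) ^ (k + 2) := norm_gowersInner_self_le hf_one (k + 1)
  rw [gowersInner_succ k g hf]
  calc ‖∑ h ∈ diffBox S k,
          (∑ n ∈ S, gowersMixedProd k g f n h) * conj (∑ n ∈ S, gowersProd k f n h)‖ ^ 2
      ≤ (∑ h ∈ diffBox S k,
          ‖∑ n ∈ S, gowersMixedProd k g f n h‖ * ‖∑ n ∈ S, gowersProd k f n h‖) ^ 2 := by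
        gcongr
        exact norm_sum_le_of_le _ fun h _ => by rw [norm_mul, RCLike.norm_conj]
    _ ≤ (∑ h ∈ diffBox S k, ‖∑ n ∈ S, gowersMixedProd k g f n h‖ ^ 2) *
          ∑ h ∈ diffBox S k, ‖∑ n ∈ S, gowersProd k f n h‖ ^ 2 := sum_mul_sq_le_sq_mul_sq _ _ _
    _ ≤ _ := by gcongr

lemma norm_gowersInner_succ_div_sq_le (hTS : T ⊆ S) (hT : T.Nonempty) (k : ℕ) {g f : G → ℂ}
    (hg : Function.support g ⊆ T) (hf : Function.support f ⊆ S) (hf_one : ∀ n, ‖f n‖ ≤ 1) :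
    (‖gowersInner S (k + 1) g f‖ / ((#(S - S) : ℝ) ^ (k + 1) * #(T - T))) ^ 2 ≤
      (∑ t ∈ T - T, ‖gowersInner S k (mulDeriv t g) (mulDeriv t f)‖ /
        ((#(S - S) : ℝ) ^ k * #(T - T))) / #(T - T) := by
  have hS : S.Nonempty := hT.mono hTS
  have hderiv : ∑ h ∈ diffBox S k, ‖∑ n ∈ S, gowersMixedProd k g f n h‖ ^ 2 ≤
      ∑ t ∈ T - T, ‖gowersInner S k (mulDeriv t g) (mulDeriv t f)‖ := by
    calc _ ≤ ‖((∑ h ∈ diffBox S k, ‖∑ n ∈ S, gowersMixedProd k g f n h‖ ^ 2 : ℝ) : ℂ)‖ := by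
          rw [Complex.norm_real]
          exact le_abs_self _
      _ ≤ _ := by
          rw [sum_norm_sq_eq_sum_gowersInner_mulDeriv hTS k f hg]
          exact norm_sum_le _ _
  rw [← sum_div, div_pow, div_le_iff₀ (by positivity)]
  calc ‖gowersInner S (k + 1) g f‖ ^ 2
      ≤ (∑ t ∈ T - T, ‖gowersInner S k (mulDeriv t g) (mulDeriv t f)‖) *
          (#(S - S) : ℝ) ^ (k + 2) := by
        grw [norm_gowersInner_succ_sq_le k g hf hf_one, hderiv]
    _ = _ := by
        field_simp
        ring

lemma mean_pow_le_mean_pow {ι : Type*} {s : Finset ι} (hs : s.Nonempty) {u : ι → ℝ}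
    (hu : ∀ i ∈ s, 0 ≤ u i) (m : ℕ) : ((∑ i ∈ s, u i) / #s) ^ m ≤ (∑ i ∈ s, u i ^ m) / #s := by
  have hcard : (#s : ℝ) ≠ 0 := by exact_mod_cast hs.card_ne_zero
  simpa [mul_sum, div_eq_inv_mul] using
    Real.pow_arith_mean_le_arith_mean_pow s (fun _ => (#s : ℝ)⁻¹) u (fun _ _ => by positivity)
      (by simp [hcard]) hu m

-- Cauchy–Schwarz in `h` turns `g` and `f` into their derivatives `∂_t g` and `∂_t f`; only
-- `t ∈ T - T` survive, and averaging over these is what gains the factor `#(T - T)`.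
lemma norm_gowersInner_div_pow_le (hTS : T ⊆ S) (hT : T.Nonempty) (k : ℕ) {g f : G → ℂ}
    (hg : Function.support g ⊆ T) (hf : Function.support f ⊆ S) (hf_one : ∀ n, ‖f n‖ ≤ 1) :
    (‖gowersInner S (k + 1) g f‖ / ((#(S - S) : ℝ) ^ (k + 1) * #(T - T))) ^ 2 ^ (k + 1) ≤
      (gowersInner S (k + 1) g g).re / (#(T - T) : ℝ) ^ (k + 2) := by
  have hS : S.Nonempty := hT.mono hTS
  induction k generalizing g f with
  | zero =>
    have hCS := norm_gowersInner_succ_sq_le 0 g hf hf_one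
    have hself : ∑ h ∈ diffBox S 0, ‖∑ n ∈ S, gowersMixedProd 0 g f n h‖ ^ 2 =
        (gowersInner S 1 g g).re := by
      rw [gowersInner_self_succ 0 (hg.trans (coe_subset.2 hTS)), Complex.ofReal_re]
      simp only [← gowersMixedProd_self]
      rfl
    rw [hself] at hCS
    simp only [zero_add, pow_one] at hCS ⊢
    rw [div_pow, mul_pow, ← div_div]
    gcongr
    exact (div_le_iff₀ (by positivity)).2 hCS
  | succ k ih =>
    set u : G → ℝ := fun t => ‖gowersInner S (k + 1) (mulDeriv t g) (mulDeriv t f)‖ /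
      ((#(S - S) : ℝ) ^ (k + 1) * #(T - T))
    calc (‖gowersInner S (k + 2) g f‖ / ((#(S - S) : ℝ) ^ (k + 2) * #(T - T))) ^ 2 ^ (k + 2)
        = ((‖gowersInner S (k + 2) g f‖ / ((#(S - S) : ℝ) ^ (k + 2) * #(T - T))) ^ 2) ^
            2 ^ (k + 1) := by rw [← pow_mul, ← pow_succ']
      _ ≤ ((∑ t ∈ T - T, u t) / #(T - T)) ^ 2 ^ (k + 1) := by
        gcongr
        exact norm_gowersInner_succ_div_sq_le hTS hT (k + 1) hg hf hf_one
      _ ≤ (∑ t ∈ T - T, u t ^ 2 ^ (k + 1)) / #(T - T) :=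
        mean_pow_le_mean_pow (hT.sub hT) (fun _ _ => by positivity) _
      _ ≤ (∑ t ∈ T - T, (gowersInner S (k + 1) (mulDeriv t g) (mulDeriv t g)).re /
            (#(T - T) : ℝ) ^ (k + 2)) / #(T - T) := by
        gcongr with t
        exact ih ((support_mulDeriv_subset t g).trans hg) ((support_mulDeriv_subset t f).trans hf)
          (norm_mulDeriv_le_one hf_one t)
      _ = (gowersInner S (k + 2) g g).re / (#(T - T) : ℝ) ^ (k + 3) := by
        rw [← sum_div, div_div, ← pow_succ, gowersInner_self_succ_eq_sum_mulDeriv hTS (k + 1) hg,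
          Complex.re_sum]

lemma norm_gowersInner_self_sq_le (k : ℕ) {f : G → ℂ} (hf : Function.support f ⊆ S) :
    ‖gowersInner S k f f‖ ^ 2 ≤ (#(S - S) : ℝ) ^ k * (gowersInner S (k + 1) f f).re := by
  rw [gowersInner_self_succ k hf, Complex.ofReal_re]
  simp only [gowersInner, gowersMixedProd_self]
  calc ‖∑ h ∈ diffBox S k, ∑ n ∈ S, gowersProd k f n h‖ ^ 2
      ≤ (∑ h ∈ diffBox S k, ‖∑ n ∈ S, gowersProd k f n h‖) ^ 2 := by
        gcongr
        exact norm_sum_le _ _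
    _ ≤ #(diffBox S k) * ∑ h ∈ diffBox S k, ‖∑ n ∈ S, gowersProd k f n h‖ ^ 2 :=
        sq_sum_le_card_mul_sum_sq
    _ = _ := by rw [card_diffBox, Nat.cast_pow]

lemma norm_sum_div_pow_le (hS : S.Nonempty) (k : ℕ) {f : G → ℂ} (hf : Function.support f ⊆ S) :
    (‖∑ n ∈ S, f n‖ / #(S - S)) ^ 2 ^ k ≤ ‖gowersInner S k f f‖ / (#(S - S) : ℝ) ^ (k + 1) := by
  induction k with
  | zero => simp [gowersInner, gowersMixedProd]
  | succ k ih =>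
    calc (‖∑ n ∈ S, f n‖ / #(S - S)) ^ 2 ^ (k + 1)
        = ((‖∑ n ∈ S, f n‖ / #(S - S)) ^ 2 ^ k) ^ 2 := by rw [← pow_mul, ← pow_succ]
      _ ≤ (‖gowersInner S k f f‖ / (#(S - S) : ℝ) ^ (k + 1)) ^ 2 := by gcongr
      _ ≤ (#(S - S) : ℝ) ^ k * ‖gowersInner S (k + 1) f f‖ / ((#(S - S) : ℝ) ^ (k + 1)) ^ 2 := by
        grw [div_pow, norm_gowersInner_self_sq_le k hf, Complex.re_le_norm]
      _ = ‖gowersInner S (k + 1) f f‖ / (#(S - S) : ℝ) ^ (k + 2) := by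
        field_simp
        ring

lemma tsum_gowersProd (k : ℕ) {f : G → ℂ} (hf : Function.support f ⊆ S) :
    ∑' nh : G × (Fin k → G), gowersProd k f nh.1 nh.2 = gowersInner S k f f := by
  have hbox (nh : G × (Fin k → G)) (hnh : nh ∉ S ×ˢ diffBox S k) :
      gowersProd k f nh.1 nh.2 = 0 := by
    by_contra hne
    obtain ⟨hn, hnh_i⟩ := ne_zero_of_gowersProd_ne_zero hne
    refine hnh (mem_product.2 ⟨hf hn, Fintype.mem_piFinset.2 fun i => ?_⟩)
    exact mem_sub.2 ⟨_, hf (hnh_i i), _, hf hn, add_sub_cancel_left _ _⟩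
  simp only [gowersInner, gowersMixedProd_self]
  rw [tsum_eq_sum hbox, sum_product, sum_comm]

lemma gowersTildeU_pow (k : ℕ) {f : G → ℂ} (hf : Function.support f ⊆ S) :
    gowersTildeU (k + 1) f ^ 2 ^ (k + 1) = (gowersInner S (k + 1) f f).re := by
  have hexp : (1 : ℝ) / 2 ^ (k + 1) = ((2 ^ (k + 1) : ℕ) : ℝ)⁻¹ := by push_cast; rw [one_div]
  rw [gowersTildeU, tsum_gowersProd (k + 1) hf, hexp,
    Real.rpow_inv_natCast_pow (gowersInner_self_succ_re_nonneg k hf) (by positivity)]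

end Inner

section LocalNorm

variable {G : Type*} [AddCommGroup G]

/-- The Gowers norm of `f` localized to a finite set `S` of an abelian group, normalized by the norm
of `1_S`. The norm `gowersUN k N` is the case where `S` is the integer interval `[1, N]`. -/
def localGowersNorm (k : ℕ) (S : Finset G) (f : G → ℂ) : ℝ :=
  gowersTildeU k ((S : Set G).indicator f) / gowersTildeU k ((S : Set G).indicator 1)

lemma gowersTildeU_nonneg (k : ℕ) {S : Finset G} {f : G → ℂ} (hf : Function.support f ⊆ S) :
    0 ≤ gowersTildeU (k + 1) f := by
  classical
  rw [gowersTildeU, tsum_gowersProd (k + 1) hf]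
  exact Real.rpow_nonneg (gowersInner_self_succ_re_nonneg k hf) _

lemma localGowersNorm_nonneg (k : ℕ) (S : Finset G) (f : G → ℂ) :
    0 ≤ localGowersNorm (k + 1) S f :=
  div_nonneg (gowersTildeU_nonneg k Set.support_indicator_subset)
    (gowersTildeU_nonneg k Set.support_indicator_subset)

lemma localGowersNorm_congr (k : ℕ) {S : Finset G} {f g : G → ℂ} (hfg : Set.EqOn f g S) :
    localGowersNorm k S f = localGowersNorm k S g := by
  rw [localGowersNorm, localGowersNorm, Set.indicator_congr hfg]

lemma gowersTildeU_comp_addMonoidHom {G' : Type*} [AddCommGroup G'] {φ : G →+ G'}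
    (hφ : Function.Injective φ) (k : ℕ) {f : G' → ℂ} (hf : Function.support f ⊆ Set.range φ) :
    gowersTildeU k (f ∘ φ) = gowersTildeU k f := by
  have hinj : Function.Injective (Prod.map φ (φ ∘ ·) : G × (Fin k → G) → G' × (Fin k → G')) :=
    hφ.prodMap hφ.comp_left
  simp only [gowersTildeU, gowersProd_comp_addMonoidHom]
  rw [← hinj.tsum_eq fun nh hnh => ?_]
  · rfl
  obtain ⟨hn, hnh_i⟩ := ne_zero_of_gowersProd_ne_zero hnh
  obtain ⟨m, hm⟩ := hf hn
  choose v hv using fun i => hf (hnh_i i)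
  refine ⟨(m, fun i => v i - m), Prod.ext hm (funext fun i => ?_)⟩
  simp [hv, hm]

lemma localGowersNorm_image {G' : Type*} [AddCommGroup G'] [DecidableEq G'] {φ : G →+ G'}
    (hφ : Function.Injective φ) (k : ℕ) (S : Finset G) (f : G' → ℂ) :
    localGowersNorm k (S.image φ) f = localGowersNorm k S (f ∘ φ) := by
  have hnorm (F : G' → ℂ) : gowersTildeU k ((S.image φ : Set G').indicator F) =
      gowersTildeU k ((S : Set G).indicator (F ∘ φ)) := by
    have hrange : (S.image φ : Set G') ⊆ Set.range φ := by
      rw [coe_image]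
      exact Set.image_subset_range φ S
    rw [← gowersTildeU_comp_addMonoidHom hφ k (Set.support_indicator_subset.trans hrange)]
    congr 1
    funext n
    simp [Set.indicator, hφ.eq_iff]
  rw [localGowersNorm, hnorm, hnorm]
  rfl

variable [DecidableEq G] {S T : Finset G}

lemma localGowersNorm_pow (k : ℕ) {f : G → ℂ} (hf : Function.support f ⊆ S) :
    localGowersNorm (k + 1) S f ^ 2 ^ (k + 1) = (gowersInner S (k + 1) f f).re /
      (gowersInner S (k + 1) ((S : Set G).indicator 1) ((S : Set G).indicator 1)).re := by
  rw [localGowersNorm, div_pow, Set.indicator_eq_self.2 hf, gowersTildeU_pow k hf,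
    gowersTildeU_pow k Set.support_indicator_subset]

lemma card_div_pow_le_gowersInner_indicator (hS : S.Nonempty) (k : ℕ) :
    (#S / #(S - S) : ℝ) ^ 2 ^ (k + 1) * (#(S - S) : ℝ) ^ (k + 2) ≤
      (gowersInner S (k + 1) ((S : Set G).indicator 1) ((S : Set G).indicator 1)).re := by
  have hmean := norm_sum_div_pow_le hS (k + 1)
    (Set.support_indicator_subset (s := (S : Set G)) (f := (1 : G → ℂ)))
  have hsum : ∑ n ∈ S, (S : Set G).indicator (1 : G → ℂ) n = #S := by
    simp [Set.indicator]
  have hre := gowersInner_self_succ k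
    (Set.support_indicator_subset (s := (S : Set G)) (f := (1 : G → ℂ)))
  rw [hsum, Complex.norm_natCast, le_div_iff₀ (by positivity), hre, Complex.norm_real,
    Real.norm_of_nonneg (by positivity)] at hmean
  rwa [hre, Complex.ofReal_re]

lemma gowersInner_indicator_pos (hS : S.Nonempty) (k : ℕ) :
    0 < (gowersInner S (k + 1) ((S : Set G).indicator 1) ((S : Set G).indicator 1)).re := by
  exact lt_of_lt_of_le (by positivity) (card_div_pow_le_gowersInner_indicator hS k)

lemma norm_gowersInner_le_localGowersNorm (hTS : T ⊆ S) (hT : T.Nonempty) (k : ℕ) {g f : G → ℂ}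
    (hg : Function.support g ⊆ T) (hf : Function.support f ⊆ S) (hf_one : ∀ n, ‖f n‖ ≤ 1) :
    ‖gowersInner S (k + 1) g f‖ ≤
      (#(S - S) : ℝ) ^ (k + 1) * #(T - T) * localGowersNorm (k + 1) T g := by
  have hS : S.Nonempty := hT.mono hTS
  have hone (n : G) : ‖(T : Set G).indicator (1 : G → ℂ) n‖ ≤ 1 := by
    simpa using norm_indicator_le_norm_self (s := (T : Set G)) (1 : G → ℂ) n
  have hST : gowersInner S (k + 1) g g = gowersInner T (k + 1) g g := by
    rw [← tsum_gowersProd _ hg, ← tsum_gowersProd _ (hg.trans (coe_subset.2 hTS))]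
  rw [← div_le_iff₀' (by positivity), ← pow_le_pow_iff_left₀ (by positivity)
    (localGowersNorm_nonneg k T g) (pow_ne_zero (k + 1) two_ne_zero)]
  calc _ ≤ (gowersInner S (k + 1) g g).re / (#(T - T) : ℝ) ^ (k + 2) :=
        norm_gowersInner_div_pow_le hTS hT k hg hf hf_one
    _ ≤ (gowersInner T (k + 1) g g).re /
          (gowersInner T (k + 1) ((T : Set G).indicator 1) ((T : Set G).indicator 1)).re := by
        rw [hST]
        exact div_le_div_of_nonneg_left (gowersInner_self_succ_re_nonneg k hg)
          (gowersInner_indicator_pos hT k)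
          ((Complex.re_le_norm _).trans (norm_gowersInner_self_le hone (k + 1)))
    _ = localGowersNorm (k + 1) T g ^ 2 ^ (k + 1) := (localGowersNorm_pow k hg).symm

lemma gowersInner_sum_self_re_le {ι : Type*} {s : Finset ι} {T : ι → Finset G} {g : ι → G → ℂ}
    (hTS : ∀ i ∈ s, T i ⊆ S) (hT : ∀ i ∈ s, (T i).Nonempty)
    (hg : ∀ i ∈ s, Function.support (g i) ⊆ T i) (hsum : Function.support (∑ i ∈ s, g i) ⊆ S)
    (hsum_one : ∀ n, ‖(∑ i ∈ s, g i) n‖ ≤ 1) (k : ℕ) :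
    (gowersInner S (k + 1) (∑ i ∈ s, g i) (∑ i ∈ s, g i)).re ≤
      ∑ i ∈ s, (#(S - S) : ℝ) ^ (k + 1) * #(T i - T i) * localGowersNorm (k + 1) (T i) (g i) := by
  rw [gowersInner_sum]
  exact (Complex.re_le_norm _).trans <| norm_sum_le_of_le s fun i hi =>
    norm_gowersInner_le_localGowersNorm (hTS i hi) (hT i hi) k (hg i hi) hsum hsum_one

theorem localGowersNorm_sum_pow_le {ι : Type*} {s : Finset ι} {T : ι → Finset G} {g : ι → G → ℂ}
    (hS : S.Nonempty) (hTS : ∀ i ∈ s, T i ⊆ S) (hT : ∀ i ∈ s, (T i).Nonempty)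
    (hg : ∀ i ∈ s, Function.support (g i) ⊆ T i) (hsum_one : ∀ n, ‖(∑ i ∈ s, g i) n‖ ≤ 1) (k : ℕ) :
    localGowersNorm (k + 1) S (∑ i ∈ s, g i) ^ 2 ^ (k + 1) ≤
      (#(S - S) / #S : ℝ) ^ 2 ^ (k + 1) *
        ∑ i ∈ s, (#(T i - T i) / #(S - S) : ℝ) * localGowersNorm (k + 1) (T i) (g i) := by
  have hsum : Function.support (∑ i ∈ s, g i) ⊆ S := by
    intro n hn
    rw [Function.mem_support, Finset.sum_apply] at hn
    obtain ⟨i, hi, hin⟩ := exists_ne_zero_of_sum_ne_zero hn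
    exact hTS i hi (hg i hi hin)
  have hterms (i : ι) : 0 ≤ localGowersNorm (k + 1) (T i) (g i) := localGowersNorm_nonneg k _ _
  rw [localGowersNorm_pow k hsum]
  calc _ ≤ (∑ i ∈ s, (#(S - S) : ℝ) ^ (k + 1) * #(T i - T i) *
          localGowersNorm (k + 1) (T i) (g i)) /
          ((#S / #(S - S) : ℝ) ^ 2 ^ (k + 1) * (#(S - S) : ℝ) ^ (k + 2)) :=
        div_le_div₀ (sum_nonneg fun i _ => mul_nonneg (by positivity) (hterms i))
          (gowersInner_sum_self_re_le hTS hT hg hsum hsum_one k) (by positivity)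
          (card_div_pow_le_gowersInner_indicator hS k)
    _ = _ := by
        rw [mul_sum, sum_div]
        refine sum_congr rfl fun i _ => ?_
        rw [div_pow, div_pow]
        field_simp
        ring

end LocalNorm

section Integers

lemma gowersUN_eq_localGowersNorm (k : ℕ) (N : ℝ) (f : ℤ → ℂ) :
    gowersUN k N f = localGowersNorm k (Icc 1 ⌊N⌋) f := by
  have htrunc (F : ℤ → ℂ) : truncN N F = ((Icc 1 ⌊N⌋ : Finset ℤ) : Set ℤ).indicator F := by
    funext n
    simp only [truncN, Set.indicator, coe_Icc, Set.mem_Icc, Int.le_floor]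
  rw [gowersUN, localGowersNorm, htrunc, htrunc]
  rfl

lemma Icc_one_sub_Icc_one (L : ℤ) (hL : 1 ≤ L) :
    Icc 1 L - Icc 1 L = Icc (1 - L) (L - 1) := by
  ext t
  simp only [mem_sub, mem_Icc]
  constructor
  · rintro ⟨a, ha, b, hb, rfl⟩
    omega
  · intro ht
    rcases le_total 0 t with h | h
    · exact ⟨t + 1, by omega, 1, by omega, by omega⟩
    · exact ⟨1, by omega, 1 - t, by omega, by omega⟩

lemma card_Icc_one_sub_Icc_one {L : ℤ} (hL : 1 ≤ L) :
    (#(Icc 1 L - Icc 1 L) : ℝ) = 2 * L - 1 := by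
  rw [Icc_one_sub_Icc_one L hL, Int.card_Icc, ← Int.cast_natCast, Int.toNat_of_nonneg (by omega)]
  push_cast
  ring

/-- The multiples of `d` in the integer interval `[1, N]`, which is `d` times `[1, N / d]`. -/
abbrev multiplesUpTo (N : ℝ) (d : ℕ) : Finset ℤ := {n ∈ Icc 1 ⌊N⌋ | (d : ℤ) ∣ n}

lemma image_mulLeft_Icc_floor_div {d : ℕ} (hd : 0 < d) (N : ℝ) :
    (Icc 1 ⌊N / d⌋).image (AddMonoidHom.mulLeft (d : ℤ)) = multiplesUpTo N d := by
  have hd_real : (0 : ℝ) < d := by exact_mod_cast hd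
  ext n
  simp only [mem_image, mem_filter, mem_Icc, Int.le_floor, le_div_iff₀ hd_real,
    AddMonoidHom.coe_mulLeft]
  constructor
  · rintro ⟨m, ⟨hm, hmN⟩, rfl⟩
    refine ⟨⟨by nlinarith, ?_⟩, dvd_mul_right _ m⟩
    push_cast
    linarith
  · rintro ⟨⟨hn, hnN⟩, m, rfl⟩
    push_cast at hnN
    exact ⟨m, ⟨by nlinarith, by linarith⟩, rfl⟩

lemma mulLeft_natCast_injective {d : ℕ} (hd : 0 < d) :
    Function.Injective (AddMonoidHom.mulLeft (d : ℤ)) :=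
  mul_right_injective₀ (by exact_mod_cast hd.ne')

lemma localGowersNorm_multiplesUpTo {d : ℕ} (hd : 0 < d) (k : ℕ) (N : ℝ) (f : ℤ → ℂ) :
    localGowersNorm k (multiplesUpTo N d) f = gowersUN k (N / d) fun n => f (d * n) := by
  rw [gowersUN_eq_localGowersNorm, ← image_mulLeft_Icc_floor_div hd,
    localGowersNorm_image (mulLeft_natCast_injective hd)]
  rfl

lemma card_multiplesUpTo_sub_self {d : ℕ} (hd : 0 < d) {N : ℝ} (hdN : d ≤ N) :
    (#(multiplesUpTo N d - multiplesUpTo N d) : ℝ) = 2 * ⌊N / d⌋ - 1 := by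
  have hfloor : 1 ≤ ⌊N / d⌋ := by
    rw [Int.le_floor, Int.cast_one, one_le_div (by exact_mod_cast hd)]
    exact hdN
  have himage : (Icc 1 ⌊N / d⌋ - Icc 1 ⌊N / d⌋).image (AddMonoidHom.mulLeft (d : ℤ)) =
      multiplesUpTo N d - multiplesUpTo N d := by
    rw [← image_mulLeft_Icc_floor_div hd]
    exact image_image₂_distrib (map_sub _)
  rw [← himage, card_image_of_injective _ (mulLeft_natCast_injective hd),
    card_Icc_one_sub_Icc_one hfloor]

lemma card_multiplesUpTo_sub_self_div_le {d : ℕ} (hd : 0 < d) {N : ℝ} (hdN : d ≤ N) :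
    (#(multiplesUpTo N d - multiplesUpTo N d) / #(Icc 1 ⌊N⌋ - Icc 1 ⌊N⌋) : ℝ) ≤ 1 / d := by
  have hd_one : (1 : ℝ) ≤ d := by exact_mod_cast hd
  have hN : 1 ≤ ⌊N⌋ := by
    rw [Int.le_floor, Int.cast_one]
    exact hd_one.trans hdN
  have hN_real : (1 : ℝ) ≤ ⌊N⌋ := by exact_mod_cast hN
  have hmul : (⌊N / d⌋ : ℝ) * d ≤ ⌊N⌋ := by
    rw [Int.floor_div_natCast]
    exact_mod_cast Int.ediv_mul_le ⌊N⌋ (by exact_mod_cast hd.ne')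
  rw [card_multiplesUpTo_sub_self hd hdN, card_Icc_one_sub_Icc_one hN,
    div_le_div_iff₀ (by linarith) (by positivity)]
  linarith

lemma card_Icc_one_sub_self_div_card_le {L : ℤ} (hL : 1 ≤ L) :
    (#(Icc 1 L - Icc 1 L) / #(Icc 1 L) : ℝ) ≤ 2 := by
  have hL_real : (1 : ℝ) ≤ L := by exact_mod_cast hL
  have hcard : (#(Icc 1 L) : ℝ) = L := by
    rw [Int.card_Icc, add_sub_cancel_right, ← Int.cast_natCast, Int.toNat_of_nonneg (by omega)]
  rw [card_Icc_one_sub_Icc_one hL, hcard, div_le_iff₀ (by linarith)]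
  linarith

lemma sum_divisors_indicator_gcd_eq {M : Type*} [AddCommMonoid M] {q : ℕ} (hq : q ≠ 0)
    (F : ℤ → M) : ∑ d ∈ q.divisors, {n : ℤ | Int.gcd n q = d}.indicator F = F := by
  funext n
  have hgcd : Int.gcd n q ∈ q.divisors :=
    Nat.mem_divisors.2 ⟨by exact_mod_cast Int.gcd_dvd_right n q, hq⟩
  rw [Finset.sum_apply, sum_eq_single_of_mem _ hgcd fun d _ hd =>
    Set.indicator_of_notMem (s := {n : ℤ | Int.gcd n q = d}) (Ne.symm hd) F]
  exact Set.indicator_of_mem (s := {m : ℤ | Int.gcd m q = Int.gcd n q}) rfl F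

lemma gcd_mul_left_eq_self_iff {d q : ℕ} (hd : 0 < d) (hdq : d ∣ q) (n : ℤ) :
    Int.gcd (d * n) q = d ↔ Int.gcd n (q / d : ℕ) = 1 := by
  obtain ⟨e, rfl⟩ := hdq
  rw [Nat.mul_div_cancel_left e hd, Nat.cast_mul, Int.gcd_mul_left, Int.natAbs_natCast,
    mul_eq_left₀ hd.ne']

lemma localGowersNorm_multiplesUpTo_indicator_gcd_eq {d q : ℕ} (hd : 0 < d) (hdq : d ∣ q)
    (k : ℕ) (N : ℝ) (f : ℤ → ℂ) :
    localGowersNorm k (multiplesUpTo N d) ({n : ℤ | Int.gcd n q = d}.indicator f) =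
      gowersUN k (N / d) fun n => f (d * n) * if Int.gcd n (q / d : ℕ) = 1 then 1 else 0 := by
  simp only [localGowersNorm_multiplesUpTo hd, Set.indicator, Set.mem_ofPred_eq,
    gcd_mul_left_eq_self_iff hd hdq, mul_ite, mul_one, mul_zero]

lemma gowersUN_pow_le_sum_localGowersNorm {N : ℝ} {q : ℕ} (hq : 1 ≤ q) (hqN : (q : ℝ) ≤ N)
    {f : ℤ → ℂ} (hf : ∀ n, ‖f n‖ ≤ 1) (k : ℕ) :
    gowersUN (k + 1) N f ^ 2 ^ (k + 1) ≤
      (#(Icc 1 ⌊N⌋ - Icc 1 ⌊N⌋) / #(Icc 1 ⌊N⌋) : ℝ) ^ 2 ^ (k + 1) * ∑ d ∈ q.divisors,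
        (#(multiplesUpTo N d - multiplesUpTo N d) / #(Icc 1 ⌊N⌋ - Icc 1 ⌊N⌋) : ℝ) *
          localGowersNorm (k + 1) (multiplesUpTo N d) ({n : ℤ | Int.gcd n q = d}.indicator f) := by
  set S : Finset ℤ := Icc 1 ⌊N⌋
  set g : ℕ → ℤ → ℂ := fun d => (S : Set ℤ).indicator ({n : ℤ | Int.gcd n q = d}.indicator f)
  have hsum : ∑ d ∈ q.divisors, g d = (S : Set ℤ).indicator f := by
    rw [← indicator_sum, sum_divisors_indicator_gcd_eq (by omega)]
  have hT (d : ℕ) (hd : d ∈ q.divisors) : (multiplesUpTo N d).Nonempty := by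
    refine ⟨d, mem_filter.2 ⟨mem_Icc.2 ⟨?_, Int.le_floor.2 ?_⟩, dvd_rfl⟩⟩
    · exact_mod_cast Nat.pos_of_mem_divisors hd
    · exact le_trans (by exact_mod_cast Nat.divisor_le hd) hqN
  have hg (d : ℕ) (_ : d ∈ q.divisors) : Function.support (g d) ⊆ multiplesUpTo N d := by
    intro n hn
    obtain ⟨hnS, hgcd_ne⟩ := Set.indicator_apply_ne_zero.1 hn
    have hgcd : Int.gcd n q = d :=
      Set.mem_of_indicator_ne_zero (s := {m : ℤ | Int.gcd m q = d}) hgcd_ne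
    exact mem_filter.2 ⟨hnS, hgcd ▸ Int.gcd_dvd_left n q⟩
  have hS : S.Nonempty := (hT 1 (Nat.one_mem_divisors.2 (by omega))).mono (filter_subset _ S)
  have hmain := localGowersNorm_sum_pow_le hS (fun d _ => filter_subset _ S) hT hg
    (fun n => by rw [hsum]; exact (norm_indicator_le_norm_self f n).trans (hf n)) k
  have hcongr (d : ℕ) : localGowersNorm (k + 1) (multiplesUpTo N d) (g d) =
      localGowersNorm (k + 1) (multiplesUpTo N d) ({n : ℤ | Int.gcd n q = d}.indicator f) :=
    localGowersNorm_congr _ (Set.eqOn_indicator.mono (coe_subset.2 (filter_subset _ S)))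
  rwa [hsum, localGowersNorm_congr _ Set.eqOn_indicator, ← gowersUN_eq_localGowersNorm,
    sum_congr rfl fun d _ => by rw [hcongr]] at hmain

theorem gowers_triangle_variant_general {k : ℕ} (hk : 1 ≤ k) {N : ℝ} {q : ℕ} (hq : 1 ≤ q)
    (hqN : (q : ℝ) ≤ N) {f : ℤ → ℂ} (hf : ∀ n, ‖f n‖ ≤ 1) :
    gowersUN k N f ^ 2 ^ k ≤ 2 ^ 2 ^ k * ∑ d ∈ q.divisors, 1 / (d : ℝ) *
      gowersUN k (N / d) fun n => f (d * n) * if Int.gcd n (q / d : ℕ) = 1 then 1 else 0 := by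
  obtain ⟨k, rfl⟩ := Nat.exists_eq_add_of_le' hk
  have hN : 1 ≤ ⌊N⌋ := by
    rw [Int.le_floor, Int.cast_one]
    exact le_trans (by exact_mod_cast hq) hqN
  refine (gowersUN_pow_le_sum_localGowersNorm hq hqN hf k).trans ?_
  gcongr ?_ ^ _ * ∑ d ∈ _, ?_ * ?_ with d hd
  · exact sum_nonneg fun d _ => mul_nonneg (by positivity) (localGowersNorm_nonneg k _ _)
  · exact card_Icc_one_sub_self_div_card_le hN
  · exact localGowersNorm_nonneg k _ _
  · exact card_multiplesUpTo_sub_self_div_le (Nat.pos_of_mem_divisors hd)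
      (le_trans (by exact_mod_cast Nat.divisor_le hd) hqN)
  · exact (localGowersNorm_multiplesUpTo_indicator_gcd_eq (Nat.pos_of_mem_divisors hd)
      (Nat.dvd_of_mem_divisors hd) _ N f).le

end Integers

end

theorem gowers_triangle_variant (k : ℕ) (hk : 1 ≤ k) :
    ∃ C : ℝ, 0 < C ∧ ∀ N : ℝ, 100 ≤ N → ∀ q : ℕ, 1 ≤ q → (q : ℝ) ≤ N →
      ∀ f : ℤ → ℝ, (∀ n, |f n| ≤ 1) → (∀ n : ℤ, f n ≠ 0 → 1 ≤ n ∧ (n : ℝ) ≤ N) →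
        gowersUN k N (fun n => ((f n : ℝ) : ℂ)) ^ (2 ^ k) ≤
          C * ∑ d ∈ q.divisors, (1 / (d : ℝ)) *
            gowersUN k (N / d)
              (fun n => ((f ((d : ℤ) * n) : ℝ) : ℂ) *
                (if Int.gcd n ((q / d : ℕ) : ℤ) = 1 then 1 else 0)) := by
  exact ⟨2 ^ 2 ^ k, by positivity, fun N _ q hq hqN f hf _ =>
    gowers_triangle_variant_general hk hq hqN (by simpa using hf)⟩
end

section
/- Let t, m ≥ 1 be integers. There exist constants c > 0 and C > 0 depending only on t, m such that the following holds for all N ≥ 100. Set Q := exp((log N)^{1/10}). Let Ω be a convex subset of [−N, N]^m, and let ψ₁, …, ψ_t: ℤ^m → ℤ be affine-linear forms ψ_i(n) = n·ψ̇_i + ψ_i(0) with ψ̇_i ∈ ℤ^m and ψ_i(0) ∈ ℤ, where the vectors ψ̇₁, …, ψ̇_t are pairwise linearly independent over ℚ and each coordinate of each ψ̇_i has absolute value at most exp((log N)^{3/5}). Then for any real 2 ≤ z ≤ Q one has |∑_{n ∈ Ω ∩ ℤ^m} ∏_{i=1}^t Λ_{Cramér,z}(ψ_i(n)) − vol(Ω)·∏_{p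 < z} β_p| ≤ C·N^m·exp(−c·(log N)^{4/5}), where vol denotes Lebesgue measure, the product is over primes p < z, and β_p := E_{n ∈ (ℤ/pℤ)^m} ∏_{i=1}^t (p/(p−1))·1_{ψ_i(n) ≠ 0 in ℤ/pℤ} (the average over all n ∈ (ℤ/pℤ)^m, viewing each ψ_i as an affine map from (ℤ/pℤ)^m to ℤ/pℤ). -/
open scoped Classical

noncomputable section

/-- The Cramér model `Λ_{Cramér,w}(n) = ∏_{p < w, p prime} (p/(p-1))·1_{p ∤ n}`. -/
def cramer (w : ℝ) (n : ℤ) : ℝ :=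
  ∏ p ∈ (Finset.range (⌈w⌉₊ + 1)).filter fun p => Nat.Prime p ∧ (p : ℝ) < w,
    if (p : ℤ) ∣ n then 0 else (p : ℝ) / ((p : ℝ) - 1)

/-- The quantity `Q = exp((log N)^{1/10})`. -/
def Qparam (N : ℝ) : ℝ := Real.exp (Real.log N ^ ((1 : ℝ) / 10))

/-- The local factor `β_p = E_{n ∈ (ℤ/pℤ)^d} ∏_i (p/(p-1))·1_{ψ_i(n) ≠ 0}`. -/
def betaLocal (d t : ℕ) (ψlin : Fin t → Fin d → ℤ) (ψconst : Fin t → ℤ) (p : ℕ) : ℝ :=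
  (∑ n ∈ Fintype.piFinset fun _ : Fin d => Finset.range p,
      ∏ i, if (p : ℤ) ∣ (∑ j, (n j : ℤ) * ψlin i j + ψconst i) then 0
        else (p : ℝ) / ((p : ℝ) - 1)) / (p : ℝ) ^ d

end

/-!
Up to the constant factor `∏_{p < z} (p / (p - 1)) ^ t`, the product of the Cramér weights is
`∏_{p < z} (1 - x_p n)`, where `x_p` is the indicator of the residues mod `p` at which some form
vanishes. Bonferroni's inequalities, the basis of Brun's pure sieve, replace this product by the
alternating sum of the elementary symmetric polynomials of degree less than `r` in the `x_p`, with
an error of at most the one of degree `r`. A term of degree at most `r` depends only on `n` modulo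
a product `d` of at most `r` primes below `z`. Since `r` is about `(log N) ^ (4 / 5) / 4` and
`log z ≤ (log N) ^ (1 / 10)`, we have `d ≤ N`. The Chinese remainder theorem and the count of
lattice points of a convex set in each residue class mod `d` evaluate the sum of such a term over
`Ω` up to `O(N ^ (m - 1) * d)`.

Rankin's trick bounds the sum of all these `d` by `exp (O(r * log z))`, which is smaller than any
power of `N`. It also bounds the term of degree `r` in the densities of the `x_p` by
`exp (O(log z) - r)`: the density is at most `t / p` by a union bound over the forms, unless some
form vanishes identically mod `p`, in which case both the sum and the main term are zero.

Lattice points are counted by rounding down one coordinate at a time. Each line meets a convex set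
in an interval, so that every rounding changes the measure of the preimage of the set by at most
the measure of a facet of a bounding box.
-/

section ElementarySymmetric

lemma esymm_cons_succ {R : Type*} [CommSemiring R] (a : R) (s : Multiset R) (k : ℕ) :
    (a ::ₘ s).esymm (k + 1) = s.esymm (k + 1) + a * s.esymm k := by
  simp [Multiset.esymm, Multiset.powersetCard_cons, Multiset.sum_map_mul_left]

lemma sum_range_pow_mul_esymm_cons {R : Type*} [CommSemiring R] (c a : R) (s : Multiset R)
    (r : ℕ) :
    ∑ k ∈ Finset.range (r + 1), c ^ k * (a ::ₘ s).esymm k =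
      ∑ k ∈ Finset.range (r + 1), c ^ k * s.esymm k +
        c * a * ∑ k ∈ Finset.range r, c ^ k * s.esymm k := by
  have hterm (k : ℕ) : c ^ (k + 1) * (a ::ₘ s).esymm (k + 1) =
      c ^ (k + 1) * s.esymm (k + 1) + c * a * (c ^ k * s.esymm k) := by
    rw [esymm_cons_succ]; ring
  simp only [Finset.sum_range_succ' _ r, hterm, Finset.sum_add_distrib, Finset.mul_sum]
  simp only [Multiset.esymm, Multiset.powersetCard_zero_left]
  ring

lemma sum_range_succ_pow_mul_esymm_zero {R : Type*} [CommSemiring R] (c : R) (r : ℕ) :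
    ∑ k ∈ Finset.range (r + 1), c ^ k * (0 : Multiset R).esymm k = 1 := by
  simp [Finset.sum_range_succ', Multiset.esymm, Multiset.powersetCard_zero_right]

lemma esymm_nonneg {R : Type*} [CommSemiring R] [PartialOrder R] [IsOrderedRing R]
    {s : Multiset R} (hs : ∀ a ∈ s, 0 ≤ a) (k : ℕ) : 0 ≤ s.esymm k := by
  refine Multiset.sum_nonneg fun b hb ↦ ?_
  obtain ⟨t, ht, rfl⟩ := Multiset.mem_map.1 hb
  exact Multiset.prod_nonneg fun a ha ↦
    hs a (Multiset.mem_of_le (Multiset.mem_powersetCard.1 ht).1 ha)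

lemma alternating_bonferroni_mem_Icc {R : Type*} [CommRing R] [LinearOrder R]
    [IsStrictOrderedRing R] {s : Multiset R} (hs : ∀ a ∈ s, a ∈ Set.Icc 0 1) (r : ℕ) :
    (-1) ^ r * ((s.map (1 - ·)).prod - ∑ k ∈ Finset.range r, (-1) ^ k * s.esymm k) ∈
      Set.Icc 0 (s.esymm r) := by
  induction s using Multiset.induction_on generalizing r with
  | empty =>
    cases r with
    | zero => simp [Multiset.esymm]
    | succ r =>
      rw [sum_range_succ_pow_mul_esymm_zero]
      simp [Multiset.esymm, Multiset.powersetCard_zero_right]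
  | cons a s ih =>
    obtain ⟨⟨ha0, ha1⟩, hs⟩ := Multiset.forall_mem_cons.1 hs
    have hprod := ih hs 0
    cases r with
    | zero =>
      simp only [pow_zero, Finset.range_zero, Finset.sum_empty, sub_zero, one_mul, Set.mem_Icc,
        Multiset.esymm, Multiset.powersetCard_zero_left, Multiset.map_singleton,
        Multiset.prod_zero, Multiset.sum_singleton, Multiset.map_cons,
        Multiset.prod_cons] at hprod ⊢
      exact ⟨mul_nonneg (sub_nonneg.2 ha1) hprod.1,
        mul_le_one₀ (sub_le_self 1 ha0) hprod.1 hprod.2⟩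
    | succ r =>
      obtain ⟨hlo, hup⟩ := ih hs (r + 1)
      obtain ⟨hlo', hup'⟩ := ih hs r
      have hrec : (-1) ^ (r + 1) * (((a ::ₘ s).map (1 - ·)).prod -
            ∑ k ∈ Finset.range (r + 1), (-1) ^ k * (a ::ₘ s).esymm k) =
          (-1) ^ (r + 1) * ((s.map (1 - ·)).prod -
            ∑ k ∈ Finset.range (r + 1), (-1) ^ k * s.esymm k) +
          a * ((-1) ^ r * ((s.map (1 - ·)).prod -
            ∑ k ∈ Finset.range r, (-1) ^ k * s.esymm k)) := by
        rw [sum_range_pow_mul_esymm_cons, Multiset.map_cons, Multiset.prod_cons]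
        ring
      rw [hrec, esymm_cons_succ]
      exact ⟨add_nonneg hlo (mul_nonneg ha0 hlo'),
        add_le_add hup (mul_le_mul_of_nonneg_left hup' ha0)⟩

lemma abs_prod_one_sub_sub_sum_range_esymm_le {R : Type*} [CommRing R] [LinearOrder R]
    [IsStrictOrderedRing R] {s : Multiset R} (hs : ∀ a ∈ s, a ∈ Set.Icc 0 1) (r : ℕ) :
    |(s.map (1 - ·)).prod - ∑ k ∈ Finset.range r, (-1) ^ k * s.esymm k| ≤ s.esymm r := by
  obtain ⟨hlo, hup⟩ := alternating_bonferroni_mem_Icc hs r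
  simpa [abs_mul, abs_pow] using (abs_of_nonneg hlo).trans_le hup

lemma sum_range_pow_mul_esymm_le_exp {s : Multiset ℝ} (hs : ∀ a ∈ s, 0 ≤ a) {c : ℝ} (hc : 0 ≤ c)
    (r : ℕ) : ∑ k ∈ Finset.range r, c ^ k * s.esymm k ≤ Real.exp (c * s.sum) := by
  induction s using Multiset.induction_on generalizing r with
  | empty =>
    cases r with
    | zero => simp
    | succ r => simp [sum_range_succ_pow_mul_esymm_zero]
  | cons a s ih =>
    obtain ⟨ha, hs⟩ := Multiset.forall_mem_cons.1 hs
    cases r with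
    | zero => simpa using Real.exp_nonneg _
    | succ r =>
      calc ∑ k ∈ Finset.range (r + 1), c ^ k * (a ::ₘ s).esymm k
          ≤ Real.exp (c * s.sum) + c * a * Real.exp (c * s.sum) := by
            rw [sum_range_pow_mul_esymm_cons]
            gcongr <;> exact ih hs _
        _ = (c * a + 1) * Real.exp (c * s.sum) := by ring
        _ ≤ Real.exp (c * a) * Real.exp (c * s.sum) := by gcongr; exact Real.add_one_le_exp _
        _ = Real.exp (c * (a ::ₘ s).sum) := by
            rw [← Real.exp_add, Multiset.sum_cons, mul_add]

lemma pow_mul_esymm_le_exp {s : Multiset ℝ} (hs : ∀ a ∈ s, 0 ≤ a) {c : ℝ} (hc : 0 ≤ c) (r : ℕ) :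
    c ^ r * s.esymm r ≤ Real.exp (c * s.sum) :=
  (Finset.single_le_sum (f := fun k ↦ c ^ k * s.esymm k)
      (fun k _ ↦ mul_nonneg (pow_nonneg hc k) (esymm_nonneg hs k))
      (Finset.self_mem_range_succ r)).trans
    (sum_range_pow_mul_esymm_le_exp hs hc (r + 1))

lemma pow_mul_sum_range_esymm_le_exp {s : Multiset ℝ} (hs : ∀ a ∈ s, 0 ≤ a) {c : ℝ}
    (hc : c ∈ Set.Icc 0 1) (r : ℕ) :
    c ^ r * ∑ k ∈ Finset.range (r + 1), s.esymm k ≤ Real.exp (c * s.sum) := by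
  refine le_trans ?_ (sum_range_pow_mul_esymm_le_exp hs hc.1 (r + 1))
  rw [Finset.mul_sum]
  refine Finset.sum_le_sum fun k hk ↦ mul_le_mul_of_nonneg_right ?_ (esymm_nonneg hs k)
  exact pow_le_pow_of_le_one hc.1 hc.2 (Finset.mem_range_succ_iff.1 hk)

lemma esymm_le_exp_sub {κ : Type*} {P : Finset κ} {g h : κ → ℝ} (hg : ∀ p ∈ P, 0 ≤ g p)
    (hgh : ∀ p ∈ P, g p ≤ h p) (r : ℕ) :
    (P.val.map g).esymm r ≤ Real.exp (3 * ∑ p ∈ P, h p - r) := by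
  have htail := pow_mul_esymm_le_exp (s := P.val.map g) (by simpa using hg) (Real.exp_nonneg 1) r
  have hsum : (P.val.map g).sum ≤ ∑ p ∈ P, h p := Finset.sum_le_sum hgh
  have hsum0 : 0 ≤ (P.val.map g).sum := Finset.sum_nonneg hg
  rw [Real.exp_sub, le_div_iff₀' (Real.exp_pos _), ← mul_one (r : ℝ), Real.exp_nat_mul]
  refine htail.trans (Real.exp_le_exp.2 ?_)
  exact mul_le_mul Real.exp_one_lt_three.le hsum hsum0 (by norm_num)

end ElementarySymmetric

section PureSieve

variable {α κ : Type*} {S : Finset α} {P : Finset κ} {x : κ → α → ℝ} {g h : κ → ℝ} {V A : ℝ}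

lemma abs_sum_esymm_sub_mul_esymm_le {k : ℕ}
    (hR : ∀ T ⊆ P, T.card = k →
      |∑ y ∈ S, ∏ p ∈ T, x p y - V * ∏ p ∈ T, g p| ≤ A * ∏ p ∈ T, h p) :
    |∑ y ∈ S, (P.val.map (x · y)).esymm k - V * (P.val.map g).esymm k| ≤
      A * (P.val.map h).esymm k := by
  simp only [Finset.esymm_map_val]
  rw [Finset.sum_comm, Finset.mul_sum, Finset.mul_sum, ← Finset.sum_sub_distrib]
  refine (Finset.abs_sum_le_sum_abs _ _).trans (Finset.sum_le_sum fun T hT ↦ ?_)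
  exact (Finset.mem_powersetCard.1 hT).elim (hR T)

lemma abs_sum_alternating_esymm_sub_le {r : ℕ}
    (hR : ∀ T ⊆ P, T.card < r →
      |∑ y ∈ S, ∏ p ∈ T, x p y - V * ∏ p ∈ T, g p| ≤ A * ∏ p ∈ T, h p) :
    |∑ y ∈ S, ∑ k ∈ Finset.range r, (-1) ^ k * (P.val.map (x · y)).esymm k -
        V * ∑ k ∈ Finset.range r, (-1) ^ k * (P.val.map g).esymm k| ≤
      A * ∑ k ∈ Finset.range r, (P.val.map h).esymm k := by
  rw [Finset.sum_comm, Finset.mul_sum, Finset.mul_sum, ← Finset.sum_sub_distrib]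
  refine (Finset.abs_sum_le_sum_abs _ _).trans (Finset.sum_le_sum fun k hk ↦ ?_)
  rw [← Finset.mul_sum, mul_left_comm, ← mul_sub, abs_mul, abs_pow, abs_neg, abs_one, one_pow,
    one_mul]
  exact abs_sum_esymm_sub_mul_esymm_le fun T hT hTk ↦ hR T hT (hTk ▸ Finset.mem_range.1 hk)

theorem brun_pure_sieve (hx : ∀ p ∈ P, ∀ y ∈ S, x p y ∈ Set.Icc 0 1)
    (hg : ∀ p ∈ P, g p ∈ Set.Icc 0 1) (hV : 0 ≤ V) {r : ℕ}
    (hR : ∀ T ⊆ P, T.card ≤ r →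
      |∑ y ∈ S, ∏ p ∈ T, x p y - V * ∏ p ∈ T, g p| ≤ A * ∏ p ∈ T, h p) :
    |∑ y ∈ S, ∏ p ∈ P, (1 - x p y) - V * ∏ p ∈ P, (1 - g p)| ≤
      A * ∑ k ∈ Finset.range (r + 1), (P.val.map h).esymm k +
        2 * V * (P.val.map g).esymm r := by
  have hbonf {f : κ → ℝ} (hf : ∀ p ∈ P, f p ∈ Set.Icc 0 1) :
      |∏ p ∈ P, (1 - f p) - ∑ k ∈ Finset.range r, (-1) ^ k * (P.val.map f).esymm k| ≤
        (P.val.map f).esymm r := by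
    have hsieve := abs_prod_one_sub_sub_sum_range_esymm_le (s := P.val.map f) (by simpa using hf) r
    rwa [Multiset.map_map] at hsieve
  have hsum : |∑ y ∈ S, ∏ p ∈ P, (1 - x p y) -
      ∑ y ∈ S, ∑ k ∈ Finset.range r, (-1) ^ k * (P.val.map (x · y)).esymm k| ≤
        ∑ y ∈ S, (P.val.map (x · y)).esymm r := by
    rw [← Finset.sum_sub_distrib]
    exact (Finset.abs_sum_le_sum_abs _ _).trans
      (Finset.sum_le_sum fun y hy ↦ hbonf fun p hp ↦ hx p hp y hy)
  have hmain : |V * ∏ p ∈ P, (1 - g p) -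
      V * ∑ k ∈ Finset.range r, (-1) ^ k * (P.val.map g).esymm k| ≤
        V * (P.val.map g).esymm r := by
    rw [← mul_sub, abs_mul, abs_of_nonneg hV]
    exact mul_le_mul_of_nonneg_left (hbonf hg) hV
  have hlow := abs_sum_alternating_esymm_sub_le fun T hT hTr ↦ hR T hT hTr.le
  have htop := abs_sum_esymm_sub_mul_esymm_le fun T hT hTr ↦ hR T hT hTr.le
  rw [Finset.sum_range_succ, mul_add]
  rw [abs_le] at hsum hmain hlow htop ⊢
  constructor <;> linarith

end PureSieve

section LatticePoints

open MeasureTheory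

lemma volume_le_one_of_forall_lt_add_one {E : Set ℝ} (hE : ∀ u ∈ E, ∀ v ∈ E, v < u + 1) :
    volume E ≤ 1 := by
  refine (Real.volume_le_diam E).trans (Metric.ediam_le fun u hu v hv ↦ ?_)
  rw [edist_dist, Real.dist_eq, ENNReal.ofReal_le_one, abs_le]
  constructor <;> linarith [hE u hu v hv, hE v hv u hu]

lemma volume_le_volume_preimage_floor_add_one {I : Set ℝ} (hI : I.OrdConnected) :
    volume I ≤ volume ((fun u : ℝ ↦ (⌊u⌋ : ℝ)) ⁻¹' I) + 1 := by
  refine (measure_le_inter_add_sdiff volume I _).trans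
    (add_le_add (measure_mono Set.inter_subset_right) (volume_le_one_of_forall_lt_add_one ?_))
  rintro u ⟨hu, -⟩ v ⟨hv, hv'⟩
  by_contra! huv
  have hle : u ≤ ⌊v⌋ := by linarith [Int.lt_floor_add_one v]
  exact hv' (hI.out hu hv ⟨hle, Int.floor_le v⟩)

lemma volume_preimage_floor_le_volume_add_one {I : Set ℝ} (hI : I.OrdConnected) :
    volume ((fun u : ℝ ↦ (⌊u⌋ : ℝ)) ⁻¹' I) ≤ volume I + 1 := by
  refine (measure_le_inter_add_sdiff volume _ I).trans
    (add_le_add (measure_mono Set.inter_subset_right) (volume_le_one_of_forall_lt_add_one ?_))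
  rintro u ⟨hu, hu'⟩ v ⟨hv, -⟩
  by_contra! huv
  have hle : u ≤ ⌊v⌋ := by linarith [Int.lt_floor_add_one v]
  exact hu' (hI.out hu hv ⟨Int.floor_le u, hle⟩)

variable {ι : Type*}

lemma volume_le_add_of_slices_le [Fintype ι] {A B D : Set (ι → ℝ)} (hA : MeasurableSet A)
    (hB : MeasurableSet B) (hD : MeasurableSet D) (i : ι)
    (h : ∀ x, volume (Function.update x i ⁻¹' A) ≤
      volume (Function.update x i ⁻¹' B) + volume (Function.update x i ⁻¹' D)) :
    volume A ≤ volume B + volume D := by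
  have hind {E : Set (ι → ℝ)} (hE : MeasurableSet E) (x : ι → ℝ) :
      ∫⁻ u, E.indicator (fun _ ↦ (1 : ENNReal)) (Function.update x i u) =
        volume (Function.update x i ⁻¹' E) :=
    lintegral_indicator_one (measurable_update x hE)
  have hmeas {E : Set (ι → ℝ)} (hE : MeasurableSet E) :
      Measurable (E.indicator fun _ ↦ (1 : ENNReal)) := measurable_const.indicator hE
  rw [← lintegral_indicator_one hA, ← lintegral_indicator_one hB, ← lintegral_indicator_one hD]
  refine (lintegral_le_of_lmarginal_le (μ := fun _ : ι ↦ (volume : Measure ℝ)) {i} (hmeas hA)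
    ((hmeas hB).add (hmeas hD)) fun x ↦ ?_).trans_eq (lintegral_add_left (hmeas hB) _)
  simp only [lmarginal_singleton]
  refine (hind hA x).trans_le ((h x).trans_eq ?_)
  rw [← hind hB, ← hind hD]
  exact (lintegral_add_left ((hmeas hB).comp (measurable_update x)) _).symm

lemma volume_pi_update_Ico (i : ι) [Fintype ι] (a b : ι → ℝ) :
    volume (Set.univ.pi (Function.update (fun j ↦ Set.Icc (a j) (b j)) i (Set.Ico 0 1))) =
      ∏ j ∈ Finset.univ.erase i, ENNReal.ofReal (b j - a j) := by
  rw [volume_pi_pi, ← Finset.mul_prod_erase _ _ (Finset.mem_univ i), Function.update_self,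
    Real.volume_Ico, sub_zero, ENNReal.ofReal_one, one_mul]
  refine Finset.prod_congr rfl fun j hj ↦ ?_
  rw [Function.update_of_ne (Finset.ne_of_mem_erase hj), Real.volume_Icc]

lemma volume_le_add_prod_of_slices_le_add_one [Fintype ι] {A B : Set (ι → ℝ)}
    (hA : MeasurableSet A) (hB : MeasurableSet B) {a b : ι → ℝ} (i : ι)
    (hbox : ∀ x ∈ A, ∀ j, j ≠ i → x j ∈ Set.Icc (a j) (b j))
    (h : ∀ x, volume (Function.update x i ⁻¹' A) ≤ volume (Function.update x i ⁻¹' B) + 1) :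
    volume A ≤ volume B + ∏ j ∈ Finset.univ.erase i, ENNReal.ofReal (b j - a j) := by
  rw [← volume_pi_update_Ico]
  refine volume_le_add_of_slices_le hA hB (.univ_pi fun j ↦ ?_) i fun x ↦ ?_
  · by_cases hj : j = i
    · subst hj; simp
    · simp [hj]
  by_cases hx : ∀ j, j ≠ i → x j ∈ Set.Icc (a j) (b j)
  · have hIco : Set.Ico 0 1 ⊆ Function.update x i ⁻¹'
        Set.univ.pi (Function.update (fun j ↦ Set.Icc (a j) (b j)) i (Set.Ico 0 1)) := by
      intro u hu j _
      by_cases hj : j = i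
      · subst hj; simpa using hu
      · simpa [hj] using hx j hj
    refine (h x).trans (add_le_add_right ?_ _)
    simpa using measure_mono (μ := volume) hIco
  · push Not at hx
    obtain ⟨j, hj, hxj⟩ := hx
    have hempty : Function.update x i ⁻¹' A = ∅ :=
      Set.eq_empty_of_forall_notMem fun u hu ↦ hxj (by simpa [hj] using hbox _ hu j hj)
    simp [hempty]

/-- The map of `ι → ℝ` rounding down the coordinates in `s`. It interpolates between the identity
and the map whose fibres are the unit cubes `n + [0, 1)^ι`. -/
noncomputable def floorOn (s : Finset ι) (x : ι → ℝ) : ι → ℝ :=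
  fun i ↦ if i ∈ s then ⌊x i⌋ else x i

lemma measurable_floorOn (s : Finset ι) : Measurable (floorOn s) := by
  refine measurable_pi_lambda _ fun i ↦ ?_
  unfold floorOn
  split_ifs <;> fun_prop

lemma floorOn_empty : floorOn (∅ : Finset ι) = id := by
  ext x i
  simp [floorOn]

lemma floorOn_univ [Fintype ι] (x : ι → ℝ) : floorOn Finset.univ x = fun i ↦ (⌊x i⌋ : ℝ) := by
  ext i
  simp [floorOn]

lemma floorOn_update_of_notMem {s : Finset ι} {i : ι} (hi : i ∉ s) (x : ι → ℝ) (u : ℝ) :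
    floorOn s (Function.update x i u) = Function.update (floorOn s x) i u := by
  ext j
  by_cases hj : j = i
  · subst hj; simp [floorOn, hi]
  · simp [floorOn, hj]

lemma floorOn_insert_update {s : Finset ι} {i : ι} (x : ι → ℝ) (u : ℝ) :
    floorOn (insert i s) (Function.update x i u) = Function.update (floorOn s x) i ⌊u⌋ := by
  ext j
  by_cases hj : j = i
  · subst hj; simp [floorOn]
  · simp [floorOn, hj]

lemma mem_Icc_add_one_of_floorOn_mem_Icc {s : Finset ι} {x : ι → ℝ} {i : ι} {a b : ℝ}
    (h : floorOn s x i ∈ Set.Icc a b) : x i ∈ Set.Icc a (b + 1) := by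
  unfold floorOn at h
  split_ifs at h
  · exact ⟨h.1.trans (Int.floor_le _), (Int.lt_floor_add_one _).le.trans (by linarith [h.2])⟩
  · exact ⟨h.1, by linarith [h.2]⟩

lemma ordConnected_preimage_update {K : Set (ι → ℝ)} (hK : Convex ℝ K) (x : ι → ℝ) (i : ι) :
    (Function.update x i ⁻¹' K).OrdConnected := by
  refine Set.ordConnected_iff_uIcc_subset.2 fun u hu v hv ↦ ?_
  rw [← segment_eq_uIcc, ← Set.image_subset_iff, Pi.image_update_segment]
  exact hK.segment_subset hu hv

lemma volume_preimage_floorOn_le_insert_add [Fintype ι] {K : Set (ι → ℝ)} (hK : Convex ℝ K)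
    (hKm : MeasurableSet K) {a b : ι → ℝ} (hbox : K ⊆ Set.Icc a b) {s : Finset ι} {i : ι}
    (hi : i ∉ s) :
    volume (floorOn s ⁻¹' K) ≤ volume (floorOn (insert i s) ⁻¹' K) +
      ∏ j ∈ Finset.univ.erase i, ENNReal.ofReal (b j + 1 - a j) := by
  refine volume_le_add_prod_of_slices_le_add_one (measurable_floorOn s hKm)
    (measurable_floorOn _ hKm) i (fun x hx j _ ↦ mem_Icc_add_one_of_floorOn_mem_Icc
      ⟨(hbox hx).1 j, (hbox hx).2 j⟩) fun x ↦ ?_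
  simp only [Set.preimage, Set.mem_ofPred_eq, floorOn_update_of_notMem hi, floorOn_insert_update]
  exact volume_le_volume_preimage_floor_add_one (ordConnected_preimage_update hK _ i)

lemma volume_preimage_floorOn_insert_le_add [Fintype ι] {K : Set (ι → ℝ)} (hK : Convex ℝ K)
    (hKm : MeasurableSet K) {a b : ι → ℝ} (hbox : K ⊆ Set.Icc a b) {s : Finset ι} {i : ι}
    (hi : i ∉ s) :
    volume (floorOn (insert i s) ⁻¹' K) ≤ volume (floorOn s ⁻¹' K) +
      ∏ j ∈ Finset.univ.erase i, ENNReal.ofReal (b j + 1 - a j) := by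
  refine volume_le_add_prod_of_slices_le_add_one (measurable_floorOn _ hKm)
    (measurable_floorOn s hKm) i (fun x hx j _ ↦ mem_Icc_add_one_of_floorOn_mem_Icc
      ⟨(hbox hx).1 j, (hbox hx).2 j⟩) fun x ↦ ?_
  simp only [Set.preimage, Set.mem_ofPred_eq, floorOn_update_of_notMem hi, floorOn_insert_update]
  exact volume_preimage_floor_le_volume_add_one (ordConnected_preimage_update hK _ i)

/-- The lattice points of a subset of `ℝ^ι`, as integer vectors. -/
def latticePoints (K : Set (ι → ℝ)) : Set (ι → ℤ) := {n | (fun i ↦ (n i : ℝ)) ∈ K}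

lemma latticePoints_mono {K L : Set (ι → ℝ)} (h : K ⊆ L) : latticePoints K ⊆ latticePoints L :=
  fun _ hn ↦ h hn

lemma finite_latticePoints_of_subset_Icc [Finite ι] {K : Set (ι → ℝ)} {a b : ι → ℝ}
    (hbox : K ⊆ Set.Icc a b) : (latticePoints K).Finite := by
  have := Fintype.ofFinite ι
  refine (Set.finite_Icc (fun i ↦ ⌈a i⌉) fun i ↦ ⌊b i⌋).subset fun n hn ↦ ?_
  exact ⟨fun i ↦ Int.ceil_le.2 ((hbox hn).1 i), fun i ↦ Int.le_floor.2 ((hbox hn).2 i)⟩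

lemma coe_filter_mem_eq_latticePoints [Fintype ι] [DecidableEq ι] {K : Set (ι → ℝ)} {N : ℝ}
    (hbox : K ⊆ Set.Icc (fun _ ↦ -N) fun _ ↦ N) :
    (((Finset.Icc (fun _ : ι ↦ -⌈N⌉) fun _ ↦ ⌈N⌉).filter fun n ↦ (fun i ↦ (n i : ℝ)) ∈ K :
      Finset (ι → ℤ)) : Set (ι → ℤ)) = latticePoints K := by
  ext n
  rw [Finset.mem_coe, Finset.mem_filter, Finset.mem_Icc]
  refine ⟨And.right, fun hn ↦ ⟨⟨fun i ↦ ?_, fun i ↦ ?_⟩, hn⟩⟩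
  · have hlow : -(⌈N⌉ : ℝ) ≤ n i := (neg_le_neg (Int.le_ceil N)).trans ((hbox hn).1 i)
    exact_mod_cast hlow
  · have hup : (n i : ℝ) ≤ ⌈N⌉ := ((hbox hn).2 i).trans (Int.le_ceil N)
    exact_mod_cast hup

lemma volume_preimage_floorOn_univ [Fintype ι] (K : Set (ι → ℝ)) :
    volume (floorOn Finset.univ ⁻¹' K) = (latticePoints K).encard := by
  have hfloor : Measurable fun (x : ι → ℝ) i ↦ ⌊x i⌋ := by fun_prop
  have hcube (n : ι → ℤ) : volume ((fun (x : ι → ℝ) i ↦ ⌊x i⌋) ⁻¹' {n}) = 1 := by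
    have hpi : (fun (x : ι → ℝ) i ↦ ⌊x i⌋) ⁻¹' {n} =
        Set.univ.pi fun i ↦ Set.Ico (n i : ℝ) (n i + 1) := by
      ext x
      simp [funext_iff, Int.floor_eq_iff]
    simp [hpi, volume_pi_pi]
  have hpre : floorOn Finset.univ ⁻¹' K =
      (fun (x : ι → ℝ) i ↦ ⌊x i⌋) ⁻¹' latticePoints K := by
    ext x
    simp [latticePoints, floorOn_univ]
  rw [hpre, ← tsum_measure_preimage_singleton (Set.to_countable _) fun n _ ↦
    hfloor (measurableSet_singleton n)]
  simp only [hcube, ENNReal.tsum_set_one]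

lemma volume_le_encard_add [Fintype ι] {K : Set (ι → ℝ)} (hK : Convex ℝ K)
    (hKm : MeasurableSet K) {a b : ι → ℝ} (hbox : K ⊆ Set.Icc a b) :
    volume K ≤ (latticePoints K).encard +
      ∑ i, ∏ j ∈ Finset.univ.erase i, ENNReal.ofReal (b j + 1 - a j) := by
  have hstep (s : Finset ι) : volume K ≤ volume (floorOn s ⁻¹' K) +
      ∑ i ∈ s, ∏ j ∈ Finset.univ.erase i, ENNReal.ofReal (b j + 1 - a j) := by
    induction s using Finset.induction_on with
    | empty => simp [floorOn_empty]
    | insert i s hi ih =>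
      rw [Finset.sum_insert hi, ← add_assoc]
      exact ih.trans (by gcongr; exact volume_preimage_floorOn_le_insert_add hK hKm hbox hi)
  simpa only [volume_preimage_floorOn_univ] using hstep Finset.univ

lemma encard_le_volume_add [Fintype ι] {K : Set (ι → ℝ)} (hK : Convex ℝ K)
    (hKm : MeasurableSet K) {a b : ι → ℝ} (hbox : K ⊆ Set.Icc a b) :
    ((latticePoints K).encard : ENNReal) ≤ volume K +
      ∑ i, ∏ j ∈ Finset.univ.erase i, ENNReal.ofReal (b j + 1 - a j) := by
  have hstep (s : Finset ι) : volume (floorOn s ⁻¹' K) ≤ volume K +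
      ∑ i ∈ s, ∏ j ∈ Finset.univ.erase i, ENNReal.ofReal (b j + 1 - a j) := by
    induction s using Finset.induction_on with
    | empty => simp [floorOn_empty]
    | insert i s hi ih =>
      rw [Finset.sum_insert hi, add_left_comm, add_comm]
      refine (volume_preimage_floorOn_insert_le_add hK hKm hbox hi).trans ?_
      gcongr
  simpa only [volume_preimage_floorOn_univ] using hstep Finset.univ

lemma volume_le_encard_latticePoints_add [Fintype ι] {K : Set (ι → ℝ)} (hK : Convex ℝ K)
    {a b : ι → ℝ} (hbox : K ⊆ Set.Icc a b) :
    volume K ≤ (latticePoints K).encard +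
      ∑ i, ∏ j ∈ Finset.univ.erase i, ENNReal.ofReal (b j + 1 - a j) := by
  rw [← measure_congr (interior_ae_eq_of_null_frontier (hK.addHaar_frontier volume))]
  refine (volume_le_encard_add hK.interior isOpen_interior.measurableSet
    (interior_subset.trans hbox)).trans ?_
  gcongr
  exact latticePoints_mono interior_subset

lemma encard_latticePoints_le_volume_add [Fintype ι] {K : Set (ι → ℝ)} (hK : Convex ℝ K)
    {a b : ι → ℝ} (hbox : K ⊆ Set.Icc a b) :
    ((latticePoints K).encard : ENNReal) ≤ volume K +
      ∑ i, ∏ j ∈ Finset.univ.erase i, ENNReal.ofReal (b j + 1 - a j) := by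
  -- `K` need not be Borel, but the convex hull of its lattice points is compact.
  set L : Set (ι → ℝ) := (fun n i ↦ (n i : ℝ)) '' latticePoints K
  have hLK : convexHull ℝ L ⊆ K := convexHull_min (Set.image_subset_iff.2 fun _ hn ↦ hn) hK
  have hL : IsCompact (convexHull ℝ L) :=
    ((finite_latticePoints_of_subset_Icc hbox).image _).isCompact_convexHull ℝ
  calc ((latticePoints K).encard : ENNReal) ≤ (latticePoints (convexHull ℝ L)).encard := by
        gcongr
        exact fun n hn ↦ subset_convexHull ℝ L (Set.mem_image_of_mem _ hn)
    _ ≤ _ := encard_le_volume_add (convex_convexHull ℝ L) hL.measurableSet (hLK.trans hbox)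
    _ ≤ _ := add_le_add_left (measure_mono hLK) _

theorem abs_ncard_latticePoints_sub_volume_le [Fintype ι] {K : Set (ι → ℝ)} (hK : Convex ℝ K)
    {a b : ι → ℝ} (hab : a ≤ b) (hbox : K ⊆ Set.Icc a b) :
    |((latticePoints K).ncard : ℝ) - volume.real K| ≤
      ∑ i, ∏ j ∈ Finset.univ.erase i, (b j + 1 - a j) := by
  have hside (j : ι) : 0 ≤ b j + 1 - a j := by linarith [hab j]
  have herr0 : 0 ≤ ∑ i, ∏ j ∈ Finset.univ.erase i, (b j + 1 - a j) :=
    Finset.sum_nonneg fun i _ ↦ Finset.prod_nonneg fun j _ ↦ hside j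
  have herr : ∑ i, ∏ j ∈ Finset.univ.erase i, ENNReal.ofReal (b j + 1 - a j) =
      ENNReal.ofReal (∑ i, ∏ j ∈ Finset.univ.erase i, (b j + 1 - a j)) := by
    rw [ENNReal.ofReal_sum_of_nonneg fun i _ ↦ Finset.prod_nonneg fun j _ ↦ hside j]
    simp only [ENNReal.ofReal_prod_of_nonneg fun j _ ↦ hside j]
  have hvol : volume K ≠ ⊤ := measure_ne_top_of_subset hbox isCompact_Icc.measure_ne_top
  have hup := encard_latticePoints_le_volume_add hK hbox
  have hlow := volume_le_encard_latticePoints_add hK hbox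
  rw [herr, ← (finite_latticePoints_of_subset_Icc hbox).cast_ncard_eq, ENat.toENNReal_coe,
    ← ENNReal.ofReal_natCast, ← ofReal_measureReal hvol, ← ENNReal.ofReal_add (by positivity) herr0,
    ENNReal.ofReal_le_ofReal_iff (by positivity)] at hup hlow
  rw [abs_le]
  constructor <;> linarith

lemma volume_real_le_pow [Fintype ι] {K : Set (ι → ℝ)} {N : ℝ} (hN : 0 ≤ N)
    (hbox : K ⊆ Set.Icc (fun _ ↦ -N) fun _ ↦ N) : volume.real K ≤ (2 * N) ^ Fintype.card ι := by
  refine (measureReal_mono hbox isCompact_Icc.measure_ne_top).trans_eq ?_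
  rw [measureReal_def, Real.volume_Icc_pi_toReal fun _ ↦ neg_le_self hN]
  simp [two_mul]

lemma volume_real_preimage_add_smul [Fintype ι] {d : ℝ} (hd : 0 < d) (c : ι → ℝ)
    (K : Set (ι → ℝ)) :
    volume.real ((fun x ↦ c + d • x) ⁻¹' K) = volume.real K / d ^ Fintype.card ι := by
  have hcomp : (fun x ↦ c + d • x) ⁻¹' K = (d • ·) ⁻¹' ((c + ·) ⁻¹' K) := rfl
  rw [hcomp, measureReal_def, Measure.addHaar_preimage_smul _ hd.ne', measure_preimage_add,
    Module.finrank_fintype_fun_eq_card, ENNReal.toReal_mul, ENNReal.toReal_ofReal (abs_nonneg _),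
    abs_of_pos (by positivity), measureReal_def, inv_mul_eq_div]

lemma ncard_latticePoints_residue_class (d : ℕ) [NeZero d] (c : ι → ℤ) (K : Set (ι → ℝ)) :
    {n ∈ latticePoints K | ∀ i, (n i : ZMod d) = c i}.ncard =
      (latticePoints ((fun x ↦ (fun i ↦ (c i : ℝ)) + (d : ℝ) • x) ⁻¹' K)).ncard := by
  have hinj : Function.Injective fun (k : ι → ℤ) i ↦ c i + d * k i := fun k l hkl ↦ by
    simpa [funext_iff, NeZero.ne d] using hkl
  refine (congrArg Set.ncard (Set.ext fun n ↦ ?_)).trans (Set.ncard_image_of_injective _ hinj)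
  refine ⟨fun ⟨hn, hc⟩ ↦ ?_, ?_⟩
  · choose k hk using fun i ↦ (ZMod.intCast_eq_intCast_iff_dvd_sub (c i) (n i) d).1 (hc i).symm
    obtain rfl : n = fun i ↦ c i + d * k i := funext fun i ↦ by rw [← hk i, add_sub_cancel]
    exact ⟨k, by simpa [latticePoints, Pi.add_def] using hn, rfl⟩
  · rintro ⟨k, hk, rfl⟩
    exact ⟨by simpa [latticePoints, Pi.add_def] using hk, fun i ↦ by simp⟩

theorem abs_ncard_latticePoints_residue_class_sub_le [Fintype ι] {K : Set (ι → ℝ)}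
    (hK : Convex ℝ K) {N : ℝ} (hbox : K ⊆ Set.Icc (fun _ ↦ -N) fun _ ↦ N) {d : ℕ} [NeZero d]
    (hd : d ≤ N) (a : ι → ZMod d) :
    |({n ∈ latticePoints K | ∀ i, (n i : ZMod d) = a i}.ncard : ℝ) -
        volume.real K / d ^ Fintype.card ι| ≤
      Fintype.card ι * (3 * N / d) ^ (Fintype.card ι - 1) := by
  obtain ⟨c, rfl⟩ : ∃ c : ι → ℤ, a = fun i ↦ (c i : ZMod d) :=
    ⟨fun i ↦ (a i).cast, by simp⟩
  have hd0 : (0 : ℝ) < d := Nat.cast_pos.2 (NeZero.pos d)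
  have hle (i : ι) : (-N - c i) / d ≤ (N - c i) / d := by gcongr; linarith
  rw [ncard_latticePoints_residue_class, ← volume_real_preimage_add_smul hd0 fun i ↦ (c i : ℝ)]
  refine (abs_ncard_latticePoints_sub_volume_le
    ((hK.translate_preimage_right _).smul_preimage (d : ℝ)) (Pi.le_def.2 hle)
    fun x hx ↦ ⟨fun i ↦ ?_, fun i ↦ ?_⟩).trans ?_
  · simpa [div_le_iff₀' hd0, add_comm] using (hbox hx).1 i
  · simpa [le_div_iff₀' hd0, le_sub_iff_add_le'] using (hbox hx).2 i
  calc ∑ i, ∏ j ∈ Finset.univ.erase i, ((N - c j) / d + 1 - (-N - c j) / d)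
      ≤ ∑ i : ι, ∏ j ∈ Finset.univ.erase i, (3 * N / d) := by
        refine Finset.sum_le_sum fun i _ ↦ Finset.prod_le_prod (fun j _ ↦ ?_) fun j _ ↦ ?_
        · linarith [hle j]
        · field_simp
          linarith
    _ = Fintype.card ι * (3 * N / d) ^ (Fintype.card ι - 1) := by
        simp only [Finset.prod_const, Finset.card_erase_of_mem, Finset.mem_univ, Finset.card_univ,
          Finset.sum_const, nsmul_eq_mul]

end LatticePoints

section Residues

open MeasureTheory
open scoped BigOperators

variable {ι : Type*} [Fintype ι] [DecidableEq ι]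

theorem abs_sum_latticePoints_sub_volume_mul_expect_le {K : Set (ι → ℝ)} (hK : Convex ℝ K)
    {N : ℝ} (hbox : K ⊆ Set.Icc (fun _ ↦ -N) fun _ ↦ N) {S : Finset (ι → ℤ)}
    (hS : (S : Set (ι → ℤ)) = latticePoints K) {d : ℕ} [NeZero d] (hd : d ≤ N)
    {f : (ι → ZMod d) → ℝ} (hf : ∀ a, |f a| ≤ 1) :
    |∑ n ∈ S, f (fun i ↦ n i) - volume.real K * 𝔼 a, f a| ≤
      Fintype.card ι * (3 * N) ^ (Fintype.card ι - 1) * d := by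
  set m := Fintype.card ι
  have hfiber : ∑ n ∈ S, f (fun i ↦ n i) =
      ∑ a, {n ∈ latticePoints K | ∀ i, (n i : ZMod d) = a i}.ncard * f a := by
    rw [← Finset.sum_fiberwise S fun n i ↦ (n i : ZMod d)]
    refine Finset.sum_congr rfl fun a _ ↦ ?_
    rw [Finset.sum_congr rfl fun n hn ↦ congrArg f (Finset.mem_filter.1 hn).2, Finset.sum_const,
      nsmul_eq_mul, ← Set.ncard_coe_finset]
    simp [← hS, funext_iff]
  have hmean : volume.real K * 𝔼 a, f a = ∑ a, volume.real K / d ^ m * f a := by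
    rw [Fintype.expect_eq_sum_div_card, Fintype.card_fun, ZMod.card, ← Finset.mul_sum]
    push_cast
    ring
  rw [hfiber, hmean, ← Finset.sum_sub_distrib]
  calc |∑ a, _| ≤ ∑ a : ι → ZMod d, m * (3 * N / d) ^ (m - 1) := by
        refine (Finset.abs_sum_le_sum_abs _ _).trans (Finset.sum_le_sum fun a _ ↦ ?_)
        rw [← sub_mul, abs_mul]
        exact (mul_le_of_le_one_right (abs_nonneg _) (hf a)).trans
          (abs_ncard_latticePoints_residue_class_sub_le hK hbox hd a)
    _ = m * (3 * N) ^ (m - 1) * d := by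
      have hd0 : (d : ℝ) ≠ 0 := NeZero.ne _
      rw [Finset.sum_const, Finset.card_univ, Fintype.card_fun, ZMod.card, nsmul_eq_mul]
      change ((d ^ m : ℕ) : ℝ) * _ = _
      rcases m with - | m
      · simp
      · push_cast
        rw [div_pow]
        field_simp
        ring

lemma expect_pi_prod {κ : Type*} [Fintype κ] [DecidableEq κ] {β : κ → Type*} [∀ k, Fintype (β k)]
    (f : ∀ k, β k → ℝ) : 𝔼 b : ∀ k, β k, ∏ k, f k (b k) = ∏ k, 𝔼 b, f k b := by
  simp only [Fintype.expect_eq_sum_div_card, Finset.prod_div_distrib, Finset.prod_univ_sum,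
    Fintype.card_pi, Nat.cast_prod, Fintype.piFinset_univ]

instance neZero_prod {κ : Type*} [Fintype κ] {q : κ → ℕ} [∀ k, NeZero (q k)] :
    NeZero (∏ k, q k) := ⟨Finset.prod_ne_zero_iff.2 fun k _ ↦ NeZero.ne (q k)⟩

lemma expect_prod_cast_eq_prod_expect {κ : Type*} [Fintype κ] {q : κ → ℕ} [∀ k, NeZero (q k)]
    (hq : Pairwise (Function.onFun Nat.Coprime q)) (f : ∀ k, (ι → ZMod (q k)) → ℝ) :
    𝔼 a : ι → ZMod (∏ k, q k), ∏ k, f k (fun i ↦ (a i).cast) = ∏ k, 𝔼 b, f k b := by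
  rw [← expect_pi_prod]
  refine Fintype.expect_equiv
    ((Equiv.piCongrRight fun _ : ι ↦ (ZMod.prodEquivPi q hq).toEquiv).trans (Equiv.piComm _))
    _ _ fun a ↦ Finset.prod_congr rfl fun k _ ↦ congrArg (f k) (funext fun i ↦ ?_)
  exact (ZMod.prodEquivPi_apply q hq (a i) k).symm

theorem abs_sum_prod_sub_volume_mul_prod_expect_le {K : Set (ι → ℝ)} (hK : Convex ℝ K)
    {N : ℝ} (hbox : K ⊆ Set.Icc (fun _ ↦ -N) fun _ ↦ N) {S : Finset (ι → ℤ)}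
    (hS : (S : Set (ι → ℤ)) = latticePoints K) {κ : Type*} {q : κ → ℕ} [∀ k, NeZero (q k)]
    (hq : Pairwise (Function.onFun Nat.Coprime q)) {f : ∀ k, (ι → ZMod (q k)) → ℝ}
    (hf : ∀ k a, |f k a| ≤ 1) {T : Finset κ} (hT : ∏ k ∈ T, (q k : ℝ) ≤ N) :
    |∑ n ∈ S, ∏ k ∈ T, f k (fun i ↦ n i) - volume.real K * ∏ k ∈ T, 𝔼 a, f k a| ≤
      Fintype.card ι * (3 * N) ^ (Fintype.card ι - 1) * ∏ k ∈ T, (q k : ℝ) := by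
  have hprod : ((∏ k : T, q k : ℕ) : ℝ) = ∏ k ∈ T, (q k : ℝ) := by
    rw [Nat.cast_prod, Finset.prod_coe_sort T fun k ↦ (q k : ℝ)]
  have hcast (n : ι → ℤ) : ∏ k ∈ T, f k (fun i ↦ n i) =
      ∏ k : T, f k (fun i ↦ ((n i : ZMod (∏ k : T, q k)).cast : ZMod (q k))) := by
    rw [← Finset.prod_coe_sort]
    refine Finset.prod_congr rfl fun k _ ↦ congrArg _ (funext fun i ↦ ?_)
    exact (ZMod.cast_intCast (Finset.dvd_prod_of_mem _ (Finset.mem_univ k)) _).symm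
  have hmean := expect_prod_cast_eq_prod_expect (ι := ι) (q := fun k : T ↦ q k)
    (hq.comp_of_injective Subtype.val_injective) fun k ↦ f k
  have hmain := abs_sum_latticePoints_sub_volume_mul_expect_le hK hbox hS (hprod.trans_le hT)
    (f := fun a ↦ ∏ k : T, f k (fun i ↦ (a i).cast)) fun a ↦ ?_
  · rwa [hmean, hprod, Finset.prod_coe_sort T fun k ↦ 𝔼 a, f k a,
      ← Finset.sum_congr rfl fun n _ ↦ hcast n] at hmain
  · rw [Finset.abs_prod]
    exact Finset.prod_le_one (fun _ _ ↦ abs_nonneg _) fun k _ ↦ hf k _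

theorem pure_sieve_latticePoints {K : Set (ι → ℝ)} (hK : Convex ℝ K)
    {N : ℝ} (hbox : K ⊆ Set.Icc (fun _ ↦ -N) fun _ ↦ N) {S : Finset (ι → ℤ)}
    (hS : (S : Set (ι → ℤ)) = latticePoints K) {κ : Type*} {q : κ → ℕ} [∀ k, NeZero (q k)]
    (hq : Pairwise (Function.onFun Nat.Coprime q)) {f : ∀ k, (ι → ZMod (q k)) → ℝ}
    (hf : ∀ k a, f k a ∈ Set.Icc 0 1) {P : Finset κ} {r : ℕ}
    (hr : ∀ T ⊆ P, T.card ≤ r → ∏ k ∈ T, (q k : ℝ) ≤ N) :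
    |∑ n ∈ S, ∏ k ∈ P, (1 - f k (fun i ↦ n i)) - volume.real K * ∏ k ∈ P, (1 - 𝔼 a, f k a)| ≤
      Fintype.card ι * (3 * N) ^ (Fintype.card ι - 1) *
          ∑ j ∈ Finset.range (r + 1), (P.val.map fun k ↦ (q k : ℝ)).esymm j +
        2 * volume.real K * (P.val.map fun k ↦ 𝔼 a, f k a).esymm r := by
  have hmean (k : κ) : 𝔼 a, f k a ∈ Set.Icc 0 1 :=
    ⟨Finset.expect_nonneg fun a _ ↦ (hf k a).1,
      Finset.expect_le Finset.univ_nonempty fun a _ ↦ (hf k a).2⟩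
  have habs (k : κ) (a : ι → ZMod (q k)) : |f k a| ≤ 1 :=
    (abs_of_nonneg (hf k a).1).trans_le (hf k a).2
  have hR (T) (hT : T ⊆ P) (hTr : T.card ≤ r) :=
    abs_sum_prod_sub_volume_mul_prod_expect_le hK hbox hS hq habs (hr T hT hTr)
  exact brun_pure_sieve (S := S) (V := volume.real K) (x := fun k n ↦ f k (fun i ↦ n i))
    (g := fun k ↦ 𝔼 a, f k a) (fun k _ n _ ↦ hf k _) (fun k _ ↦ hmean k) measureReal_nonneg hR

end Residues

section AffineForms

open scoped BigOperators

variable {ι τ : Type*} [Fintype ι]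

lemma card_zeros_affine_form_mul_card_le [DecidableEq ι] {F : Type*} [Field F] [Fintype F]
    [DecidableEq F] {w : ι → F} {c : F} (h : ∃ a : ι → F, ∑ j, a j * w j + c ≠ 0) :
    Fintype.card {a : ι → F // ∑ j, a j * w j + c = 0} * Fintype.card F ≤
      Fintype.card (ι → F) := by
  by_cases hw : w = 0
  · obtain ⟨a, ha⟩ := h
    simp_all
  obtain ⟨i, hi⟩ := Function.ne_iff.1 hw
  rw [← Fintype.card_prod]
  have hshift (a : {a : ι → F // ∑ j, a j * w j + c = 0}) (s : F) :
      ∑ j, (a.1 + Pi.single i s : ι → F) j * w j + c = s * w i := by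
    simp [add_mul, Finset.sum_add_distrib, Pi.single_apply, add_right_comm, a.2]
  refine Fintype.card_le_of_injective
    (fun as : {a : ι → F // ∑ j, a j * w j + c = 0} × F ↦ as.1.1 + Pi.single i as.2)
    fun ⟨a, s⟩ ⟨b, u⟩ hab ↦ ?_
  have hab : a.1 + Pi.single i s = b.1 + Pi.single i u := hab
  obtain rfl : s = u := mul_right_cancel₀ hi (by rw [← hshift a, ← hshift b, hab])
  simpa [Subtype.ext_iff] using hab

lemma expect_affine_form_eq_zero_le [DecidableEq ι] {F : Type*} [Field F] [Fintype F]
    [DecidableEq F] {w : ι → F} {c : F} (h : ∃ a : ι → F, ∑ j, a j * w j + c ≠ 0) :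
    𝔼 a : ι → F, (if ∑ j, a j * w j + c = 0 then 1 else 0 : ℝ) ≤ 1 / Fintype.card F := by
  have hF : (0 : ℝ) < Fintype.card F := Nat.cast_pos.2 Fintype.card_pos
  rw [Fintype.expect_eq_sum_div_card, Finset.sum_boole, ← Fintype.card_subtype,
    div_le_div_iff₀ (by positivity) hF, one_mul]
  exact_mod_cast card_zeros_affine_form_mul_card_le h

/-- The indicator function of the residue vectors modulo `p` at which at least one of the affine
forms `n ↦ ∑ j, n j * ψlin i j + ψconst i` vanishes. The sieve removes these vectors. -/
noncomputable def vanishingIndicator (ψlin : τ → ι → ℤ) (ψconst : τ → ℤ) (p : ℕ)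
    (a : ι → ZMod p) : ℝ :=
  if ∃ i, ∑ j, a j * (ψlin i j : ZMod p) + ψconst i = 0 then 1 else 0

variable {ψlin : τ → ι → ℤ} {ψconst : τ → ℤ} {p : ℕ}

lemma vanishingIndicator_mem_Icc (a : ι → ZMod p) :
    vanishingIndicator ψlin ψconst p a ∈ Set.Icc 0 1 := by
  unfold vanishingIndicator
  split_ifs <;> simp

variable [Fintype τ]

lemma prod_ite_dvd_eq_pow_mul_one_sub_vanishingIndicator (n : ι → ℤ) (c : ℝ) :
    ∏ i, (if (p : ℤ) ∣ ∑ j, n j * ψlin i j + ψconst i then 0 else c) =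
      c ^ Fintype.card τ * (1 - vanishingIndicator ψlin ψconst p fun j ↦ n j) := by
  have hdvd (i : τ) : (p : ℤ) ∣ ∑ j, n j * ψlin i j + ψconst i ↔
      ∑ j, (n j : ZMod p) * (ψlin i j : ZMod p) + ψconst i = 0 := by
    rw [← ZMod.intCast_zmod_eq_zero_iff_dvd]
    push_cast
    rfl
  simp only [hdvd, vanishingIndicator]
  split_ifs with h
  · obtain ⟨i, hi⟩ := h
    rw [sub_self, mul_zero]
    exact Finset.prod_eq_zero (Finset.mem_univ i) (if_pos hi)
  · push Not at h
    simp [h]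

lemma expect_vanishingIndicator_le [DecidableEq ι] [Fact p.Prime]
    (h : ∀ i, ∃ a : ι → ZMod p, ∑ j, a j * (ψlin i j : ZMod p) + ψconst i ≠ 0) :
    𝔼 a, vanishingIndicator ψlin ψconst p a ≤ Fintype.card τ * (1 / p) := by
  calc 𝔼 a, vanishingIndicator ψlin ψconst p a
      ≤ 𝔼 a : ι → ZMod p, ∑ i,
          (if ∑ j, a j * (ψlin i j : ZMod p) + ψconst i = 0 then 1 else 0 : ℝ) := by
        refine Finset.expect_le_expect fun a _ ↦ ?_
        unfold vanishingIndicator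
        split_ifs with ha
        · obtain ⟨i, hi⟩ := ha
          rw [Finset.sum_boole, Nat.one_le_cast, Nat.one_le_iff_ne_zero, Finset.card_ne_zero]
          exact ⟨i, Finset.mem_filter.2 ⟨Finset.mem_univ i, hi⟩⟩
        · exact Finset.sum_nonneg fun _ _ ↦ by positivity
    _ = ∑ i, 𝔼 a : ι → ZMod p,
          (if ∑ j, a j * (ψlin i j : ZMod p) + ψconst i = 0 then 1 else 0 : ℝ) :=
        Finset.expect_sum_comm _ _ _
    _ ≤ ∑ _i : τ, 1 / (p : ℝ) := by
        refine Finset.sum_le_sum fun i _ ↦ (expect_affine_form_eq_zero_le (h i)).trans_eq ?_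
        rw [ZMod.card]
    _ = Fintype.card τ * (1 / p) := by rw [Finset.sum_const, Finset.card_univ, nsmul_eq_mul]

lemma vanishingIndicator_eq_one_or_expect_le [DecidableEq ι] (p : ℕ) [Fact p.Prime] :
    (∀ a, vanishingIndicator ψlin ψconst p a = 1) ∨
      𝔼 a, vanishingIndicator ψlin ψconst p a ≤ Fintype.card τ * (1 / p) := by
  by_cases h : ∀ i, ∃ a : ι → ZMod p, ∑ j, a j * (ψlin i j : ZMod p) + ψconst i ≠ 0
  · exact .inr (expect_vanishingIndicator_le h)
  · push Not at h
    obtain ⟨i, hi⟩ := h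
    exact .inl fun a ↦ if_pos ⟨i, hi a⟩

lemma sum_piFinset_range_cast [DecidableEq ι] [NeZero p] (f : (ι → ZMod p) → ℝ) :
    ∑ n ∈ Fintype.piFinset fun _ : ι ↦ Finset.range p, f (fun j ↦ n j) = ∑ a, f a := by
  refine Finset.sum_nbij' (fun n j ↦ (n j : ZMod p)) (fun a j ↦ (a j).val) ?_ ?_ ?_ ?_ ?_
  · simp
  · simp [ZMod.val_lt]
  · intro n hn
    ext j
    simpa using ZMod.val_cast_of_lt (by simpa using Fintype.mem_piFinset.1 hn j)
  · simp
  · simp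

lemma betaLocal_eq {m t : ℕ} {ψlin : Fin t → Fin m → ℤ} {ψconst : Fin t → ℤ} [NeZero p] :
    betaLocal m t ψlin ψconst p =
      ((p : ℝ) / (p - 1)) ^ t * (1 - 𝔼 a, vanishingIndicator ψlin ψconst p a) := by
  simp only [betaLocal, prod_ite_dvd_eq_pow_mul_one_sub_vanishingIndicator, Int.cast_natCast]
  rw [← Finset.mul_sum,
    sum_piFinset_range_cast fun a ↦ 1 - vanishingIndicator ψlin ψconst p a,
    mul_div_assoc, Finset.sum_sub_distrib, sub_div, Fintype.expect_eq_sum_div_card]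
  simp

end AffineForms

section PrimeSums

variable {P : Finset Nat.Primes} {x y : ℝ}

instance fact_prime_val (p : Nat.Primes) : Fact (p : ℕ).Prime := ⟨p.2⟩

lemma image_coe_subset_Icc_floor (hP : ∀ p ∈ P, (p : ℝ) ≤ x) :
    P.image ((↑) : Nat.Primes → ℕ) ⊆ Finset.Icc 1 ⌊x⌋₊ := by
  intro n hn
  obtain ⟨p, hp, rfl⟩ := Finset.mem_image.1 hn
  exact Finset.mem_Icc.2 ⟨p.2.one_le, Nat.le_floor (hP p hp)⟩

lemma card_primes_le (hx : 0 ≤ x) (hP : ∀ p ∈ P, (p : ℝ) ≤ x) : (P.card : ℝ) ≤ x := by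
  have hcard : P.card ≤ ⌊x⌋₊ :=
    calc P.card = (P.image ((↑) : Nat.Primes → ℕ)).card :=
          (Finset.card_image_of_injective P Nat.Primes.coe_nat_injective).symm
      _ ≤ (Finset.Icc 1 ⌊x⌋₊).card := Finset.card_le_card (image_coe_subset_Icc_floor hP)
      _ = ⌊x⌋₊ := by rw [Nat.card_Icc, Nat.add_sub_cancel]
  exact (Nat.cast_le.2 hcard).trans (Nat.floor_le hx)

lemma sum_primes_inv_le_one_add_log (hx : 1 ≤ x) (hP : ∀ p ∈ P, (p : ℝ) ≤ x) :
    ∑ p ∈ P, 1 / (p : ℝ) ≤ 1 + Real.log x := by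
  calc ∑ p ∈ P, 1 / (p : ℝ)
      = ∑ n ∈ P.image ((↑) : Nat.Primes → ℕ), 1 / (n : ℝ) :=
        (Finset.sum_image (f := fun n : ℕ ↦ 1 / (n : ℝ))
          Nat.Primes.coe_nat_injective.injOn).symm
    _ ≤ ∑ n ∈ Finset.Icc 1 ⌊x⌋₊, 1 / (n : ℝ) :=
        Finset.sum_le_sum_of_subset_of_nonneg (image_coe_subset_Icc_floor hP)
          fun _ _ _ ↦ by positivity
    _ = harmonic ⌊x⌋₊ := by simp [harmonic_eq_sum_Icc]
    _ ≤ 1 + Real.log x := harmonic_floor_le_one_add_log x hx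

lemma div_sub_one_le_exp_two_div {u : ℝ} (hu : 2 ≤ u) : u / (u - 1) ≤ Real.exp (2 / u) := by
  refine le_trans ?_ (Real.add_one_le_exp _)
  rw [div_le_iff₀ (by linarith)]
  have hexpand : (2 / u + 1) * (u - 1) = u + (u - 2) / u := by
    field_simp
    ring
  rw [hexpand]
  exact le_add_of_nonneg_right (div_nonneg (by linarith) (by linarith))

lemma prod_div_sub_one_pow_nonneg (P : Finset Nat.Primes) (t : ℕ) :
    0 ≤ ∏ p ∈ P, ((p : ℝ) / (p - 1)) ^ t :=
  Finset.prod_nonneg fun p _ ↦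
    pow_nonneg (div_nonneg p.1.cast_nonneg (sub_nonneg.2 (by exact_mod_cast p.2.one_le))) t

lemma prod_div_sub_one_pow_le_exp (P : Finset Nat.Primes) (t : ℕ) :
    ∏ p ∈ P, ((p : ℝ) / (p - 1)) ^ t ≤ Real.exp (2 * t * ∑ p ∈ P, 1 / (p : ℝ)) := by
  rw [Finset.mul_sum, Real.exp_sum]
  refine Finset.prod_le_prod (fun p _ ↦ ?_) fun p _ ↦ ?_
  · simpa using prod_div_sub_one_pow_nonneg {p} t
  have hp : (2 : ℝ) ≤ p := by exact_mod_cast p.2.two_le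
  have hexp : Real.exp (2 * t * (1 / p)) = Real.exp (2 / p) ^ t := by
    rw [← Real.exp_nat_mul]
    ring_nf
  rw [hexp]
  exact pow_le_pow_left₀ (div_nonneg (by linarith) (by linarith)) (div_sub_one_le_exp_two_div hp) t

lemma prod_primes_le_exp (hy : 0 ≤ y) (hP : ∀ p ∈ P, (p : ℝ) ≤ Real.exp y) {r : ℝ}
    (hr : P.card ≤ r) : ∏ p ∈ P, (p : ℝ) ≤ Real.exp (r * y) :=
  calc ∏ p ∈ P, (p : ℝ) ≤ ∏ _p ∈ P, Real.exp y :=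
        Finset.prod_le_prod (fun p _ ↦ p.1.cast_nonneg) hP
    _ = Real.exp (P.card * y) := by rw [Finset.prod_const, Real.exp_nat_mul]
    _ ≤ Real.exp (r * y) := by gcongr

lemma sum_range_esymm_primes_le_exp (hy : 0 ≤ y) (hP : ∀ p ∈ P, (p : ℝ) ≤ Real.exp y) (r : ℕ) :
    ∑ k ∈ Finset.range (r + 1), (P.val.map fun p : Nat.Primes ↦ (p : ℝ)).esymm k ≤
      Real.exp (1 + 2 * r * y) := by
  have hsum : (P.val.map fun p : Nat.Primes ↦ (p : ℝ)).sum ≤ Real.exp (2 * y) := by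
    calc ∑ p ∈ P, (p : ℝ) ≤ P.card * Real.exp y := by
          simpa using Finset.sum_le_card_nsmul P _ _ hP
      _ ≤ Real.exp y * Real.exp y := by
          gcongr
          exact card_primes_le (Real.exp_nonneg y) hP
      _ = Real.exp (2 * y) := by rw [← Real.exp_add, two_mul]
  have hc : Real.exp (-(2 * y)) ∈ Set.Icc 0 1 :=
    ⟨Real.exp_nonneg _, Real.exp_le_one_iff.2 (by linarith)⟩
  have hrankin := pow_mul_sum_range_esymm_le_exp (s := P.val.map fun p : Nat.Primes ↦ (p : ℝ))
    (by simp) hc r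
  have hone : Real.exp (-(2 * y)) * (P.val.map fun p : Nat.Primes ↦ (p : ℝ)).sum ≤ 1 := by
    calc _ ≤ Real.exp (-(2 * y)) * Real.exp (2 * y) := by gcongr
      _ = 1 := by rw [← Real.exp_add, neg_add_cancel, Real.exp_zero]
  have hpow : Real.exp (2 * r * y) * Real.exp (-(2 * y)) ^ r = 1 := by
    rw [← Real.exp_nat_mul, ← Real.exp_add, ← Real.exp_zero]
    ring_nf
  calc ∑ k ∈ Finset.range (r + 1), (P.val.map fun p : Nat.Primes ↦ (p : ℝ)).esymm k
      = Real.exp (2 * r * y) * (Real.exp (-(2 * y)) ^ r *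
          ∑ k ∈ Finset.range (r + 1), (P.val.map fun p : Nat.Primes ↦ (p : ℝ)).esymm k) := by
        rw [← mul_assoc, hpow, one_mul]
    _ ≤ Real.exp (2 * r * y) * Real.exp 1 := by
        gcongr
        exact hrankin.trans (Real.exp_le_exp.2 hone)
    _ = Real.exp (1 + 2 * r * y) := by rw [← Real.exp_add, add_comm]

end PrimeSums

section VanishingSieve

open MeasureTheory
open scoped BigOperators

lemma sum_prod_one_sub_eq_of_forall_eq_one {ι κ : Type*} [Fintype ι] [DecidableEq ι] {q : κ → ℕ}
    [∀ k, NeZero (q k)] {f : ∀ k, (ι → ZMod (q k)) → ℝ} {P : Finset κ} {k : κ} (hk : k ∈ P)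
    (hf : ∀ a, f k a = 1) (S : Finset (ι → ℤ)) (V : ℝ) :
    ∑ n ∈ S, ∏ k ∈ P, (1 - f k fun j ↦ n j) = V * ∏ k ∈ P, (1 - 𝔼 a, f k a) := by
  have hmean : 𝔼 a, f k a = 1 := by simp [hf]
  rw [Finset.prod_eq_zero hk (sub_eq_zero.2 hmean.symm), mul_zero]
  exact Finset.sum_eq_zero fun n _ ↦ Finset.prod_eq_zero hk (sub_eq_zero.2 (hf _).symm)

lemma abs_sum_prod_one_sub_vanishingIndicator_sub_le {ι τ κ : Type*} [Fintype ι] [DecidableEq ι]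
    [Fintype τ] {ψlin : τ → ι → ℤ} {ψconst : τ → ℤ} {K : Set (ι → ℝ)} (hK : Convex ℝ K)
    {N : ℝ} (hN : 0 ≤ N) (hbox : K ⊆ Set.Icc (fun _ ↦ -N) fun _ ↦ N) {S : Finset (ι → ℤ)}
    (hS : (S : Set (ι → ℤ)) = latticePoints K) {q : κ → ℕ} [∀ k, Fact (q k).Prime]
    (hq : Pairwise (Function.onFun Nat.Coprime q)) {P : Finset κ} {r : ℕ}
    (hr : ∀ T ⊆ P, T.card ≤ r → ∏ k ∈ T, (q k : ℝ) ≤ N) :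
    |∑ n ∈ S, ∏ k ∈ P, (1 - vanishingIndicator ψlin ψconst (q k) fun j ↦ n j) -
        volume.real K * ∏ k ∈ P, (1 - 𝔼 a, vanishingIndicator ψlin ψconst (q k) a)| ≤
      Fintype.card ι * (3 * N) ^ (Fintype.card ι - 1) *
          ∑ j ∈ Finset.range (r + 1), (P.val.map fun k ↦ (q k : ℝ)).esymm j +
        2 * volume.real K *
          Real.exp (3 * (Fintype.card τ * ∑ k ∈ P, 1 / (q k : ℝ)) - r) := by
  by_cases hzero : ∃ k ∈ P, ∀ a, vanishingIndicator ψlin ψconst (q k) a = 1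
  · obtain ⟨k, hk, hone⟩ := hzero
    rw [sum_prod_one_sub_eq_of_forall_eq_one hk hone S (volume.real K), sub_self, abs_zero]
    have hsum := Finset.sum_nonneg fun j (_ : j ∈ Finset.range (r + 1)) ↦
      esymm_nonneg (s := P.val.map fun k ↦ (q k : ℝ)) (by simp) j
    positivity
  push Not at hzero
  have hmean (k : κ) (hk : k ∈ P) :
      𝔼 a, vanishingIndicator ψlin ψconst (q k) a ≤ Fintype.card τ * (1 / q k) := by
    obtain ⟨a, ha⟩ := hzero k hk
    exact (vanishingIndicator_eq_one_or_expect_le (q k)).resolve_left fun h ↦ ha (h a)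
  have hsieve := pure_sieve_latticePoints hK hbox hS hq
    (f := fun k ↦ vanishingIndicator ψlin ψconst (q k)) (fun _ ↦ vanishingIndicator_mem_Icc) hr
  have htail := esymm_le_exp_sub (fun k _ ↦ Finset.expect_nonneg fun a _ ↦
    (vanishingIndicator_mem_Icc a).1) hmean r
  rw [← Finset.mul_sum] at htail
  exact hsieve.trans (add_le_add_right (mul_le_mul_of_nonneg_left htail (by positivity)) _)

end VanishingSieve

section CramerModel

open MeasureTheory
open scoped BigOperators

/-- The primes `p < z`, over which the Cramér model at level `z` sieves. As a set of elements of
`Nat.Primes` it can index the family of residue rings `ZMod p`. -/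
noncomputable def primesBelow (z : ℝ) : Finset Nat.Primes :=
  ((Finset.range (⌈z⌉₊ + 1)).filter fun p ↦ Nat.Prime p ∧ (p : ℝ) < z).subtype Nat.Prime

lemma lt_of_mem_primesBelow {z : ℝ} {p : Nat.Primes} (hp : p ∈ primesBelow z) : (p : ℝ) < z :=
  (Finset.mem_filter.1 (Finset.mem_subtype.1 hp)).2.2

lemma prod_filter_prime_eq_prod_primesBelow (z : ℝ) (f : ℕ → ℝ) :
    ∏ p ∈ (Finset.range (⌈z⌉₊ + 1)).filter fun p ↦ Nat.Prime p ∧ (p : ℝ) < z, f p =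
      ∏ p ∈ primesBelow z, f p :=
  (Finset.prod_subtype_of_mem f fun _ hp ↦ (Finset.mem_filter.1 hp).2.1).symm

lemma pairwise_coprime_primes :
    Pairwise (Function.onFun Nat.Coprime fun p : Nat.Primes ↦ (p : ℕ)) :=
  fun p q hpq ↦ (Nat.coprime_primes p.2 q.2).2 (Nat.Primes.coe_nat_injective.ne hpq)

variable {t m : ℕ} {ψlin : Fin t → Fin m → ℤ} {ψconst : Fin t → ℤ} {z : ℝ}

lemma prod_cramer_eq (n : Fin m → ℤ) :
    ∏ i, cramer z (∑ j, n j * ψlin i j + ψconst i) =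
      (∏ p ∈ primesBelow z, ((p : ℝ) / (p - 1)) ^ t) *
        ∏ p ∈ primesBelow z, (1 - vanishingIndicator ψlin ψconst p fun j ↦ n j) := by
  simp only [cramer, prod_filter_prime_eq_prod_primesBelow]
  rw [Finset.prod_comm, ← Finset.prod_mul_distrib]
  refine Finset.prod_congr rfl fun p _ ↦ ?_
  rw [prod_ite_dvd_eq_pow_mul_one_sub_vanishingIndicator, Fintype.card_fin]

lemma prod_betaLocal_eq :
    ∏ p ∈ (Finset.range (⌈z⌉₊ + 1)).filter fun p ↦ Nat.Prime p ∧ (p : ℝ) < z,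
        betaLocal m t ψlin ψconst p =
      (∏ p ∈ primesBelow z, ((p : ℝ) / (p - 1)) ^ t) *
        ∏ p ∈ primesBelow z, (1 - 𝔼 a, vanishingIndicator ψlin ψconst p a) := by
  rw [prod_filter_prime_eq_prod_primesBelow, ← Finset.prod_mul_distrib]
  exact Finset.prod_congr rfl fun p _ ↦ betaLocal_eq

theorem abs_sum_prod_cramer_sub_volume_mul_prod_betaLocal_le {K : Set (Fin m → ℝ)}
    (hK : Convex ℝ K) {N : ℝ} (hN : 0 ≤ N) (hbox : K ⊆ Set.Icc (fun _ ↦ -N) fun _ ↦ N)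
    {S : Finset (Fin m → ℤ)} (hS : (S : Set (Fin m → ℤ)) = latticePoints K) {y : ℝ} (hy : 0 ≤ y)
    (hz : z ≤ Real.exp y) {r : ℕ} (hr : Real.exp (r * y) ≤ N) :
    |∑ n ∈ S, ∏ i, cramer z (∑ j, n j * ψlin i j + ψconst i) - volume.real K *
        ∏ p ∈ (Finset.range (⌈z⌉₊ + 1)).filter fun p ↦ Nat.Prime p ∧ (p : ℝ) < z,
          betaLocal m t ψlin ψconst p| ≤
      Real.exp (2 * t * (1 + y)) * (m * (3 * N) ^ (m - 1) * Real.exp (1 + 2 * r * y) +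
        2 * volume.real K * Real.exp (3 * (t * (1 + y)) - r)) := by
  set P := primesBelow z with hPdef
  have hP : ∀ p ∈ P, (p : ℝ) ≤ Real.exp y := fun p hp ↦ (lt_of_mem_primesBelow hp).le.trans hz
  have hinv : ∑ p ∈ P, 1 / (p : ℝ) ≤ 1 + y := by
    simpa using sum_primes_inv_le_one_add_log (Real.one_le_exp hy) hP
  have hsieve := abs_sum_prod_one_sub_vanishingIndicator_sub_le (ψlin := ψlin) (ψconst := ψconst)
    hK hN hbox hS pairwise_coprime_primes (P := P) (r := r) fun T hT hTr ↦
      (prod_primes_le_exp hy (fun p hp ↦ hP p (hT hp)) (Nat.cast_le.2 hTr)).trans hr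
  rw [Fintype.card_fin, Fintype.card_fin] at hsieve
  simp only [prod_cramer_eq, prod_betaLocal_eq, ← hPdef]
  rw [← Finset.mul_sum, mul_left_comm, ← mul_sub, abs_mul,
    abs_of_nonneg (prod_div_sub_one_pow_nonneg P t)]
  gcongr
  · exact (prod_div_sub_one_pow_le_exp P t).trans (by gcongr)
  · refine hsieve.trans ?_
    gcongr
    exact sum_range_esymm_primes_le_exp hy hP r

end CramerModel

section MainTheorem

open MeasureTheory

variable {t y r : ℝ}

lemma mul_le_pow_eight_div_add_sq (t : ℝ) (hy : 1 ≤ y) :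
    5 * t * y ≤ y ^ 8 / 8 + 50 * t ^ 2 := by
  have hpow : y ^ 2 ≤ y ^ 8 := pow_le_pow_right₀ hy (by norm_num)
  nlinarith [sq_nonneg (y - 20 * t)]

lemma tail_exponent_le (hy : 1 ≤ y) (hr : y ^ 8 / 4 - 1 ≤ r) :
    2 * t * (1 + y) + (3 * (t * (1 + y)) - r) ≤ 5 * t + 1 + 50 * t ^ 2 - 1 / 8 * y ^ 8 := by
  linarith [mul_le_pow_eight_div_add_sq t hy]

lemma lattice_exponent_le (ht : 0 ≤ t) (hy : 1 ≤ y) (hr : r ≤ y ^ 8 / 4) :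
    2 * t * (1 + y) + (1 + 2 * r * y) ≤
      y ^ 10 + (5 * t + 1 + 50 * t ^ 2 - 1 / 8 * y ^ 8) := by
  have hpos : 0 ≤ y ^ 8 := by positivity
  have hpow₈ : y ^ 8 ≤ y ^ 10 := pow_le_pow_right₀ hy (by norm_num)
  have hpow₉ : y ^ 9 ≤ y ^ 10 := pow_le_pow_right₀ hy (by norm_num)
  have hty : 0 ≤ t * y := by positivity
  have hry : r * y ≤ y ^ 8 / 4 * y := by gcongr
  linarith [mul_le_pow_eight_div_add_sq t hy]

lemma sieve_error_le {t m : ℕ} {y V : ℝ} (hy : 1 ≤ y) (hV : V ≤ (2 * Real.exp (y ^ 10)) ^ m)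
    {r : ℕ} (hr : (r : ℝ) ∈ Set.Icc (y ^ 8 / 4 - 1) (y ^ 8 / 4)) :
    Real.exp (2 * t * (1 + y)) *
        (m * (3 * Real.exp (y ^ 10)) ^ (m - 1) * Real.exp (1 + 2 * r * y) +
          2 * V * Real.exp (3 * (t * (1 + y)) - r)) ≤
      (m * 3 ^ m + 2 * 2 ^ m) * Real.exp (5 * t + 1 + 50 * t ^ 2) * Real.exp (y ^ 10) ^ m *
        Real.exp (-(1 / 8) * y ^ 8) := by
  set N := Real.exp (y ^ 10)
  set E := Real.exp (5 * t + 1 + 50 * t ^ 2 - 1 / 8 * y ^ 8)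
  have hlattice : Real.exp (2 * t * (1 + y)) * Real.exp (1 + 2 * r * y) ≤ N * E := by
    rw [← Real.exp_add, ← Real.exp_add]
    exact Real.exp_le_exp.2 (lattice_exponent_le t.cast_nonneg hy hr.2)
  have htail : Real.exp (2 * t * (1 + y)) * Real.exp (3 * (t * (1 + y)) - r) ≤ E := by
    rw [← Real.exp_add]
    exact Real.exp_le_exp.2 (tail_exponent_le hy hr.1)
  have hpow : m * (3 * N) ^ (m - 1) * N ≤ m * (3 * N) ^ m := by
    rcases m with - | m
    · simp
    · rw [Nat.add_sub_cancel, mul_assoc, pow_succ]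
      gcongr
      linarith [Real.exp_pos (y ^ 10)]
  calc _ = m * (3 * N) ^ (m - 1) *
          (Real.exp (2 * t * (1 + y)) * Real.exp (1 + 2 * r * y)) +
        2 * V * (Real.exp (2 * t * (1 + y)) * Real.exp (3 * (t * (1 + y)) - r)) := by ring
    _ ≤ m * (3 * N) ^ (m - 1) * (N * E) + 2 * (2 * N) ^ m * E := by gcongr
    _ ≤ m * (3 * N) ^ m * E + 2 * (2 * N) ^ m * E := by
        rw [← mul_assoc]
        gcongr
    _ = (m * 3 ^ m + 2 * 2 ^ m) * N ^ m * E := by ring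
    _ = _ := by
        rw [mul_right_comm _ (Real.exp _), mul_assoc _ (Real.exp _), ← Real.exp_add, neg_mul,
          ← sub_eq_add_neg]

lemma log_rpow_pow {N : ℝ} (hN : 1 ≤ N) (a : ℝ) (k : ℕ) :
    (Real.log N ^ a) ^ k = Real.log N ^ (a * k) := by
  rw [Real.rpow_mul (Real.log_nonneg hN), Real.rpow_natCast]

theorem linear_equations_in_cramer_model_general (t m : ℕ) :
    ∃ c C : ℝ, 0 < c ∧ 0 < C ∧ ∀ N : ℝ, Real.exp 1 ≤ N →
      ∀ (ψlin : Fin t → Fin m → ℤ) (ψconst : Fin t → ℤ),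
      ∀ Ω : Set (Fin m → ℝ), Convex ℝ Ω →
        Ω ⊆ Set.Icc (fun _ => -N) (fun _ => N) →
      ∀ z : ℝ, z ≤ Qparam N →
        |(∑ n ∈ (Finset.Icc (fun _ : Fin m => -⌈N⌉) fun _ => ⌈N⌉).filter
              (fun n => (fun i => (n i : ℝ)) ∈ Ω),
            ∏ i, cramer z (∑ j, n j * ψlin i j + ψconst i))
          - (MeasureTheory.volume Ω).toReal *
              ∏ p ∈ (Finset.range (⌈z⌉₊ + 1)).filter
                  (fun p => Nat.Prime p ∧ (p : ℝ) < z),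
                betaLocal m t ψlin ψconst p|
          ≤ C * N ^ m * Real.exp (-c * Real.log N ^ ((4 : ℝ) / 5)) := by
  refine ⟨1 / 8, (m * 3 ^ m + 2 * 2 ^ m) * Real.exp (5 * t + 1 + 50 * t ^ 2), by norm_num,
    by positivity, fun N hN ψlin ψconst Ω hΩ hbox z hz ↦ ?_⟩
  have hN1 : 1 ≤ N := (Real.one_le_exp zero_le_one).trans hN
  have hN0 : 0 < N := one_pos.trans_le hN1
  set y := Real.log N ^ ((1 : ℝ) / 10) with hydef
  have hy : 1 ≤ y := Real.one_le_rpow ((Real.le_log_iff_exp_le hN0).2 hN) (by norm_num)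
  have hNy : N = Real.exp (y ^ 10) := by rw [hydef, log_rpow_pow hN1]; norm_num [Real.exp_log hN0]
  have hy8 : Real.log N ^ ((4 : ℝ) / 5) = y ^ 8 := by rw [hydef, log_rpow_pow hN1]; norm_num
  -- `r` is large enough for the truncation error `exp (O(y) - r)`, while `r * y` is of smaller
  -- order than `log N = y ^ 10`, so that the lattice point errors cannot eat up a factor `N`.
  set r := ⌊y ^ 8 / 4⌋₊
  have hr : (r : ℝ) ∈ Set.Icc (y ^ 8 / 4 - 1) (y ^ 8 / 4) :=
    ⟨(Nat.sub_one_lt_floor _).le, Nat.floor_le (by positivity)⟩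
  have hry : Real.exp (r * y) ≤ N := by
    rw [hNy, Real.exp_le_exp]
    calc r * y ≤ y ^ 8 * y := by gcongr; linarith [hr.2, pow_nonneg (zero_le_one.trans hy) 8]
      _ ≤ y ^ 10 := by rw [← pow_succ]; exact pow_le_pow_right₀ hy (by norm_num)
  have hV : volume.real Ω ≤ (2 * N) ^ m := by simpa using volume_real_le_pow hN0.le hbox
  rw [hy8]
  refine (abs_sum_prod_cramer_sub_volume_mul_prod_betaLocal_le hΩ hN0.le hbox
    (coe_filter_mem_eq_latticePoints hbox) (zero_le_one.trans hy) hz hry).trans ?_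
  rw [hNy] at hV ⊢
  exact sieve_error_le hy hV hr

end MainTheorem

theorem linear_equations_in_cramer_model (t m : ℕ) (ht : 1 ≤ t) (hm : 1 ≤ m) :
    ∃ c C : ℝ, 0 < c ∧ 0 < C ∧ ∀ N : ℝ, 100 ≤ N →
      ∀ (ψlin : Fin t → Fin m → ℤ) (ψconst : Fin t → ℤ),
        (∀ i j, i ≠ j → ∀ a b : ℤ, (∀ x, a * ψlin i x + b * ψlin j x = 0) → a = 0 ∧ b = 0) →
        (∀ i j, |(ψlin i j : ℝ)| ≤ Real.exp (Real.log N ^ ((3 : ℝ) / 5))) →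
      ∀ Ω : Set (Fin m → ℝ), Convex ℝ Ω →
        Ω ⊆ Set.Icc (fun _ => -N) (fun _ => N) →
      ∀ z : ℝ, 2 ≤ z → z ≤ Qparam N →
        |(∑ n ∈ (Finset.Icc (fun _ : Fin m => -⌈N⌉) fun _ => ⌈N⌉).filter
              (fun n => (fun i => (n i : ℝ)) ∈ Ω),
            ∏ i, cramer z (∑ j, n j * ψlin i j + ψconst i))
          - (MeasureTheory.volume Ω).toReal *
              ∏ p ∈ (Finset.range (⌈z⌉₊ + 1)).filter
                  (fun p => Nat.Prime p ∧ (p : ℝ) < z),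
                betaLocal m t ψlin ψconst p|
          ≤ C * N ^ m * Real.exp (-c * Real.log N ^ ((4 : ℝ) / 5)) := by
  obtain ⟨c, C, hc, hC, h⟩ := linear_equations_in_cramer_model_general t m
  exact ⟨c, C, hc, hC, fun N hN ψlin ψconst _ _ Ω hΩ hbox z _ hz ↦
    h N (by linarith [Real.exp_one_lt_three]) ψlin ψconst Ω hΩ hbox z hz⟩
end
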